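/- arXiv:1905.00605 — 6 statements merged into one kernel-verified Lean document; each statement's English description precedes it below -/
import Mathlib

section
/- Let X be a real Banach space that is both ρ-convex and σ-smooth, and let σ ≤ p ≤ ρ. Then for every R > 0 there exists a constant C > 0 such that D_p(x,y) ≤ C · D_p(y,x)^{σ/ρ} for all x, y ∈ X with ‖x‖ < R and ‖y‖ < R. -/
open Filter Topology

noncomputable section

/-- The modulus of convexity of a normed space `X`. -/
def modConvex (X : Type*) [NormedAddCommGroup X] (ε : ℝ) : ℝ :=
  sInf {d : ℝ | ∃ x y : X, ‖x‖ = 1 ∧ ‖y‖ = 1 ∧ ε ≤ ‖x - y‖ ∧ d = 1 - ‖x + y‖ / 2}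

/-- The modulus of smoothness of a normed space `X`. -/
def modSmooth (X : Type*) [NormedAddCommGroup X] [NormedSpace ℝ X] (τ : ℝ) : ℝ :=
  sSup {d : ℝ | ∃ x y : X, ‖x‖ = 1 ∧ ‖y‖ = 1 ∧ d = (‖x + τ • y‖ + ‖x - τ • y‖) / 2 - 1}

/-- `X` is uniformly convex: the modulus of convexity is positive for positive ε. -/
def UnifConvex (X : Type*) [NormedAddCommGroup X] : Prop :=
  ∀ ε : ℝ, 0 < ε → ε ≤ 2 → 0 < modConvex X ε

/-- `X` is uniformly smooth: `ρ_X(τ)/τ → 0` as `τ → 0⁺`. -/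
def UnifSmooth (X : Type*) [NormedAddCommGroup X] [NormedSpace ℝ X] : Prop :=
  Tendsto (fun τ => modSmooth X τ / τ) (𝓝[>] (0 : ℝ)) (𝓝 0)

/-- `X` is uniformly convex of power type `ρ`. -/
def PowerConvex (X : Type*) [NormedAddCommGroup X] (ρ : ℝ) : Prop :=
  ∃ c > (0 : ℝ), ∀ ε ∈ Set.Icc (0 : ℝ) 2, c * ε ^ ρ ≤ modConvex X ε

/-- `X` is uniformly smooth of power type `σ` (with `σ > 1`). -/
def PowerSmooth (X : Type*) [NormedAddCommGroup X] [NormedSpace ℝ X] (σ : ℝ) : Prop :=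
  1 < σ ∧ ∃ C > (0 : ℝ), ∀ τ ∈ Set.Icc (0 : ℝ) 1, modSmooth X τ ≤ C * τ ^ σ

variable {X : Type*} [NormedAddCommGroup X] [NormedSpace ℝ X]

/-- The duality mapping `j_p`, the Fréchet derivative of `x ↦ (1/p)‖x‖^p`. -/
def dualityMap (p : ℝ) (x : X) : X →L[ℝ] ℝ :=
  fderiv ℝ (fun y : X => 1 / p * ‖y‖ ^ p) x

/-- The Bregman distance `D_p(x, y)`. -/
def bregmanDist (p : ℝ) (x y : X) : ℝ :=
  1 / p * ‖x‖ ^ p - 1 / p * ‖y‖ ^ p - dualityMap p y (x - y)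

/-- The Bregman projection of `x` onto the set `S`: the minimizer of `m ↦ D_p(m, x)` over `S`. -/
def bregmanProj (p : ℝ) (S : Set X) (x : X) : X :=
  letI : Nonempty X := ⟨x⟩
  Classical.epsilon fun y => y ∈ S ∧ ∀ m ∈ S, bregmanDist p y x ≤ bregmanDist p m x

/-- The Bregman distance `D_p(S, x)` from the point `x` to the set `S`. -/
def bregmanDistSet (p : ℝ) (S : Set X) (x : X) : ℝ :=
  bregmanDist p (bregmanProj p S x) x

/-- The metric projection of `x` onto the set `S`: the point of `S` nearest to `x`. -/
def metricProj (S : Set X) (x : X) : X :=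
  letI : Nonempty X := ⟨x⟩
  Classical.epsilon fun y => y ∈ S ∧ ∀ m ∈ S, ‖x - y‖ ≤ ‖x - m‖


section Helpers

def UCx (X : Type*) [NormedAddCommGroup X] (c ρ : ℝ) : Prop :=
  ∀ u v : X, ‖u‖ = 1 → ‖v‖ = 1 → c * ‖u - v‖ ^ ρ ≤ 1 - ‖u + v‖ / 2

def USx (X : Type*) [NormedAddCommGroup X] (C σ : ℝ) : Prop :=
  ∀ x h : X, x ≠ 0 → ‖h‖ ≤ ‖x‖ →
    ‖x + h‖ + ‖x - h‖ - 2 * ‖x‖ ≤ C * ‖x‖ * (‖h‖ / ‖x‖) ^ σ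

theorem ucx_of_powerConvex {X : Type*} [NormedAddCommGroup X] {ρ : ℝ}
    (h : PowerConvex X ρ) : ∃ c > 0, UCx X c ρ := by
  obtain ⟨c, hc, H⟩ := h
  refine ⟨c, hc, fun u v hu hv => ?_⟩
  have h2 : ‖u - v‖ ≤ 2 := by
    have := norm_sub_le u v
    linarith
  refine (H _ ⟨norm_nonneg _, h2⟩).trans ?_
  refine csInf_le ⟨0, ?_⟩ ⟨u, v, hu, hv, le_rfl, rfl⟩
  rintro d ⟨x, y, hx, hy, -, rfl⟩
  have := norm_add_le x y
  linarith

theorem usx_of_powerSmooth {X : Type*} [NormedAddCommGroup X] [NormedSpace ℝ X] {σ : ℝ}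
    (h : PowerSmooth X σ) : ∃ C > 0, USx X C σ := by
  obtain ⟨h1, C, hC, H⟩ := h
  refine ⟨2 * C, by positivity, fun x h hx hh => ?_⟩
  have hx0 : 0 < ‖x‖ := norm_pos_iff.2 hx
  by_cases hh0 : h = 0
  · subst hh0
    have : 0 ≤ 2 * C * ‖x‖ * (‖(0 : X)‖ / ‖x‖) ^ σ := by positivity
    refine le_trans ?_ this
    simp
    linarith
  have hh1 : 0 < ‖h‖ := norm_pos_iff.2 hh0
  set τ := ‖h‖ / ‖x‖ with hτ
  have hτ1 : τ ≤ 1 := by rw [hτ, div_le_one hx0]; exact hh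
  have hτ0 : 0 ≤ τ := by positivity
  have key := H τ ⟨hτ0, hτ1⟩
  have : (‖‖x‖⁻¹ • x + τ • (‖h‖⁻¹ • h)‖ + ‖‖x‖⁻¹ • x - τ • (‖h‖⁻¹ • h)‖) / 2 - 1
      ≤ modSmooth X τ := by
    refine le_csSup ⟨τ, ?_⟩ ⟨_, _, ?_, ?_, rfl⟩
    · rintro d ⟨a, b, ha, hb, rfl⟩
      have e1 := norm_add_le a (τ • b)
      have e2 := norm_sub_le a (τ • b)
      rw [norm_smul, Real.norm_of_nonneg hτ0, hb] at e1 e2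
      linarith
    · rw [norm_smul, norm_inv, norm_norm, inv_mul_cancel₀ hx0.ne']
    · rw [norm_smul, norm_inv, norm_norm, inv_mul_cancel₀ hh1.ne']
  have e : τ • (‖h‖⁻¹ • h) = ‖x‖⁻¹ • h := by
    rw [smul_smul, hτ]
    congr 1
    field_simp
  rw [e, ← smul_add, ← smul_sub, norm_smul, norm_smul, norm_inv, norm_norm] at this
  have t2 := this.trans key
  have t3 := mul_le_mul_of_nonneg_left t2 (show 0 ≤ 2 * ‖x‖ by positivity)
  have e3 : 2 * ‖x‖ * ((‖x‖⁻¹ * ‖x + h‖ + ‖x‖⁻¹ * ‖x - h‖) / 2 - 1)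
    = ‖x + h‖ + ‖x - h‖ - 2 * ‖x‖ := by field_simp
  rw [e3] at t3
  linarith

theorem bregman_form {X : Type*} [NormedAddCommGroup X] [NormedSpace ℝ X] {C σ p : ℝ}
    (hσ : 1 < σ) (hC : 0 < C) (hp : 1 < p) (H : USx X C σ) (y : X) :
    ∃ f : X →L[ℝ] ℝ, (∀ x, |f x| ≤ ‖x‖) ∧ f y = ‖y‖ ∧
      (∀ h, y ≠ 0 → ‖h‖ ≤ ‖y‖ → ‖y + h‖ - ‖y‖ - f h ≤ C * ‖y‖ * (‖h‖ / ‖y‖) ^ σ) ∧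
      ∀ x, bregmanDist p x y =
        1 / p * ‖x‖ ^ p + (1 - 1 / p) * ‖y‖ ^ p - ‖y‖ ^ (p - 1) * f x := by
  obtain ⟨f, hf1, hf2⟩ := exists_dual_vector'' ℝ y
  have hf2 : f y = ‖y‖ := by simpa using hf2
  have hf : ∀ x, |f x| ≤ ‖x‖ := fun x => by
    have := f.le_of_opNorm_le hf1 x
    simpa using this
  have hs : ∀ h, y ≠ 0 → ‖h‖ ≤ ‖y‖ →
      ‖y + h‖ - ‖y‖ - f h ≤ C * ‖y‖ * (‖h‖ / ‖y‖) ^ σ := by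
    intro h hy hh
    have e1 := H y h hy hh
    have e2 := (le_abs_self _).trans (hf (y - h))
    rw [map_sub, hf2] at e2
    linarith
  refine ⟨f, hf, hf2, hs, fun x => ?_⟩
  have hp0 : p ≠ 0 := by linarith
  by_cases hy : y = 0
  · subst hy
    have hd : HasFDerivAt (fun y : X => 1 / p * ‖y‖ ^ p) (0 : X →L[ℝ] ℝ) 0 := by
      rw [hasFDerivAt_iff_isLittleO_nhds_zero]
      simp only [zero_add, norm_zero, Real.zero_rpow hp0, mul_zero, sub_zero,
        zero_apply]
      refine Asymptotics.IsLittleO.const_mul_left ?_ _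
      rw [Asymptotics.isLittleO_iff]
      intro c hc
      have : Tendsto (fun h : X => ‖h‖ ^ (p - 1)) (𝓝 0) (𝓝 0) := by
        have h1 : ContinuousAt (fun h : X => ‖h‖ ^ (p - 1)) 0 :=
          continuous_norm.continuousAt.rpow_const (Or.inr (by linarith))
        have := h1.tendsto
        simpa [Real.zero_rpow (show p - 1 ≠ 0 by linarith)] using this
      filter_upwards [this.eventually (gt_mem_nhds hc)] with h hh
      rw [Real.norm_of_nonneg (by positivity)]
      by_cases h0 : h = 0
      · simp [h0, Real.zero_rpow hp0]
      have hpos : 0 < ‖h‖ := norm_pos_iff.2 h0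
      have : ‖h‖ ^ p = ‖h‖ ^ (p - 1) * ‖h‖ := by
        rw [← Real.rpow_add_one hpos.ne']; congr 1; ring
      rw [this]
      gcongr
    rw [bregmanDist, dualityMap, hd.fderiv]
    simp [Real.zero_rpow hp0, Real.zero_rpow (show p - 1 ≠ 0 by linarith)]
  · have hy0 : 0 < ‖y‖ := norm_pos_iff.2 hy
    have hn : HasFDerivAt (fun y : X => ‖y‖) f y := by
      rw [hasFDerivAt_iff_isLittleO_nhds_zero, Asymptotics.isLittleO_iff]
      intro c hc
      have : Tendsto (fun h : X => C * (‖h‖ / ‖y‖) ^ (σ - 1)) (𝓝 0) (𝓝 0) := by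
        have h1 : ContinuousAt (fun h : X => C * (‖h‖ / ‖y‖) ^ (σ - 1)) 0 := by
          refine ContinuousAt.mul continuousAt_const ?_
          exact (continuous_norm.div_const _).continuousAt.rpow_const (Or.inr (by linarith))
        have := h1.tendsto
        simpa [Real.zero_rpow (show σ - 1 ≠ 0 by linarith)] using this
      have h2 : Tendsto (fun h : X => ‖h‖) (𝓝 0) (𝓝 0) := by
        simpa using (continuous_norm (E := X)).tendsto 0
      filter_upwards [this.eventually (gt_mem_nhds hc), h2.eventually (gt_mem_nhds hy0)]
        with h hh hh2
      have e2 := (le_abs_self _).trans (hf (y + h))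
      rw [map_add, hf2] at e2
      rw [Real.norm_of_nonneg (by linarith)]
      refine (hs h hy hh2.le).trans ?_
      by_cases h0 : h = 0
      · simp [h0, Real.zero_rpow (show σ ≠ 0 by linarith)]
      have hpos : 0 < ‖h‖ := norm_pos_iff.2 h0
      have : (‖h‖ / ‖y‖) ^ σ = (‖h‖ / ‖y‖) ^ (σ - 1) * (‖h‖ / ‖y‖) := by
        rw [← Real.rpow_add_one (by positivity)]; congr 1; ring
      rw [this]
      calc C * ‖y‖ * ((‖h‖ / ‖y‖) ^ (σ - 1) * (‖h‖ / ‖y‖))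
          = (C * (‖h‖ / ‖y‖) ^ (σ - 1)) * ‖h‖ := by field_simp
        _ ≤ c * ‖h‖ := by gcongr
    have hd := (hn.rpow_const (p := p) (Or.inl hy0.ne')).const_mul (1 / p)
    rw [bregmanDist, dualityMap, hd.fderiv]
    have : ‖y‖ ^ p = ‖y‖ ^ (p - 1) * ‖y‖ := by
      rw [← Real.rpow_add_one hy0.ne']; congr 1; ring
    simp only [smul_apply, smul_eq_mul, map_sub, hf2]
    rw [this]
    field_simp
    ring

/-- scalar Bregman distance -/
noncomputable def sd (p a b : ℝ) : ℝ := 1 / p * a ^ p + (1 - 1 / p) * b ^ p - b ^ (p - 1) * a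

theorem sd_nonneg {p a b : ℝ} (hp : 1 < p) (ha : 0 ≤ a) (hb : 0 ≤ b) : 0 ≤ sd p a b := by
  have hp0 : p ≠ 0 := by linarith
  have hp1 : p - 1 ≠ 0 := by linarith
  have hc : p.HolderConjugate (p / (p - 1)) := Real.HolderConjugate.conjExponent hp
  have := Real.young_inequality_of_nonneg ha (Real.rpow_nonneg hb (p - 1)) hc
  rw [← Real.rpow_mul hb] at this
  have e : (p - 1) * (p / (p - 1)) = p := by field_simp
  rw [e] at this
  have e2 : b ^ p / (p / (p - 1)) = (1 - 1 / p) * b ^ p := by field_simp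
  rw [e2] at this
  unfold sd
  have e3 : a ^ p / p = 1 / p * a ^ p := by ring
  nlinarith

theorem rpow_pred {p b : ℝ} (hp : 1 < p) (hb : 0 ≤ b) : b ^ p = b ^ (p - 1) * b := by
  rcases hb.eq_or_lt with rfl | hb
  · simp [Real.zero_rpow (show p ≠ 0 by linarith)]
  · rw [← Real.rpow_add_one hb.ne']; congr 1; ring

theorem sd_add {p a m b : ℝ} (hp : 1 < p) (hm : 0 ≤ m) (hb : 0 ≤ b) :
    sd p a b = sd p a m + sd p m b + (m ^ (p - 1) - b ^ (p - 1)) * (a - m) := by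
  unfold sd
  rw [rpow_pred hp hm, rpow_pred hp hb]
  ring

theorem one_sub_rpow {q t : ℝ} (hq : 0 < q) (ht0 : 0 ≤ t) (ht : t ≤ 1) :
    min 1 q * (1 - t) ≤ 1 - t ^ q := by
  rcases le_total 1 q with h | h
  · rw [min_eq_left h]
    have : t ^ q ≤ t ^ (1 : ℝ) := by
      rcases ht0.eq_or_lt with rfl | h0
      · simp [Real.zero_rpow hq.ne']
      · exact Real.rpow_le_rpow_of_exponent_ge h0 ht h
    rw [Real.rpow_one] at this
    linarith
  · rw [min_eq_right h]
    have := rpow_one_add_le_one_add_mul_self (s := t - 1) (by linarith) hq.le h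
    rw [add_sub_cancel] at this
    linarith

theorem sd_lower {p : ℝ} (hp : 1 < p) : ∃ c > 0, ∀ a b : ℝ, 0 ≤ a → 0 ≤ b → max a b = 1 →
    c * (a - b) ^ 2 ≤ sd p a b := by
  set q := p - 1 with hq
  have hq0 : 0 < q := by linarith
  have hm0 : 0 < min 1 q := lt_min one_pos hq0
  have h2 : 0 < (1 / 2 : ℝ) ^ q := by positivity
  have h21 : (1 / 2 : ℝ) ^ q ≤ 1 := Real.rpow_le_one (by norm_num) (by norm_num) hq0.le
  refine ⟨min 1 q * (1 / 2) ^ q / 4, by positivity, fun a b ha hb hab => ?_⟩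
  set m := (a + b) / 2 with hm
  have hmm : 0 ≤ m := by positivity
  have e := sd_add (a := a) hp hmm hb
  have n1 := sd_nonneg hp ha hmm
  have n2 := sd_nonneg hp hmm hb
  rw [← hq] at e
  suffices H : min 1 q * (1 / 2) ^ q / 4 * (a - b) ^ 2 ≤ (m ^ q - b ^ q) * (a - m) by linarith
  rcases le_total a b with h | h
  · rw [max_eq_right h] at hab
    subst hab
    have := one_sub_rpow hq0 hmm (by linarith)
    rw [Real.one_rpow]
    have t : min 1 q * (1 - m) * (m - a) ≤ (1 - m ^ q) * (m - a) :=
      mul_le_mul_of_nonneg_right this (by linarith)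
    have : min 1 q * (1 / 2) ^ q / 4 * (a - 1) ^ 2 ≤ min 1 q * 1 / 4 * (a - 1) ^ 2 := by gcongr
    have e5 : min 1 q * (1 - m) * (m - a) = min 1 q * 1 / 4 * (a - 1) ^ 2 := by rw [hm]; ring
    linarith
  · rw [max_eq_left h] at hab
    subst hab
    have hm1 : 1 / 2 ≤ m := by linarith
    have hbm : b / m ≤ 1 := by rw [div_le_one (by linarith)]; linarith
    have := one_sub_rpow hq0 (by positivity) hbm
    rw [Real.div_rpow hb hmm] at this
    have hmq : (1 / 2) ^ q ≤ m ^ q := by gcongr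
    have hmq0 : 0 < m ^ q := by linarith
    have t := mul_le_mul_of_nonneg_left this hmq0.le
    have e6 : m ^ q * (1 - b ^ q / m ^ q) = m ^ q - b ^ q := by field_simp
    rw [e6] at t
    have hb1 : m - b ≤ 1 - b / m := by
      have hm0' : 0 < m := by linarith
      have hm1' : m ≤ 1 := by linarith
      have : 1 - b / m = (m - b) / m := by field_simp
      rw [this, le_div_iff₀ hm0']
      nlinarith
    have t2 : (1 / 2) ^ q * (min 1 q * (m - b)) ≤ m ^ q - b ^ q := by
      refine le_trans ?_ t
      have : 0 ≤ m - b := by linarith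
      gcongr
    have t3 := mul_le_mul_of_nonneg_right t2 (show 0 ≤ 1 - m by linarith)
    refine le_trans (le_of_eq ?_) t3
    rw [hm]; ring

theorem sd_upper {p : ℝ} (hp : 1 < p) : ∃ K > 0, ∀ a b : ℝ, a ∈ Set.Icc (1 / 2 : ℝ) 1 →
    b ∈ Set.Icc (1 / 2 : ℝ) 1 → sd p a b ≤ K * (a - b) ^ 2 := by
  have hcd : ContDiffOn ℝ 1 (fun t : ℝ => t ^ (p - 1)) (Set.Icc (1 / 2 : ℝ) 1) := by
    intro t ht
    refine (Real.contDiffAt_rpow_const_of_ne ?_).contDiffWithinAt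
    have := ht.1
    linarith
  obtain ⟨K, hK⟩ := hcd.exists_lipschitzOnWith one_ne_zero (convex_Icc _ _) isCompact_Icc
  refine ⟨K + 1, by positivity, fun a b ha hb => ?_⟩
  have ha0 : 0 ≤ a := by linarith [ha.1]
  have hb0 : 0 ≤ b := by linarith [hb.1]
  have e := sd_add (a := b) (m := a) (b := b) hp ha0 hb0
  have n1 := sd_nonneg hp hb0 ha0
  have z : sd p b b = 0 := by unfold sd; rw [rpow_pred hp hb0]; ring
  have l := hK.dist_le_mul a ha b hb
  rw [Real.dist_eq, Real.dist_eq] at l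
  have : (a ^ (p - 1) - b ^ (p - 1)) * (a - b) ≤ K * (a - b) ^ 2 := by
    calc _ ≤ |(a ^ (p - 1) - b ^ (p - 1)) * (a - b)| := le_abs_self _
      _ = |a ^ (p - 1) - b ^ (p - 1)| * |a - b| := abs_mul _ _
      _ ≤ K * |a - b| * |a - b| := by gcongr
      _ = K * (a - b) ^ 2 := by rw [mul_assoc, ← sq, sq_abs]
  nlinarith [sq_nonneg (a - b)]


theorem usx_support {X : Type*} [NormedAddCommGroup X] [NormedSpace ℝ X] {C σ : ℝ}
    (H : USx X C σ) (f : X →L[ℝ] ℝ) (hf : ∀ x, |f x| ≤ ‖x‖) {y : X} (hf2 : f y = ‖y‖)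
    (h : X) (hy : y ≠ 0) (hh : ‖h‖ ≤ ‖y‖) :
    ‖y + h‖ - ‖y‖ - f h ≤ C * ‖y‖ * (‖h‖ / ‖y‖) ^ σ := by
  have e1 := H y h hy hh
  have e2 := (le_abs_self _).trans (hf (y - h))
  rw [map_sub, hf2] at e2
  linarith

/-- the Bregman distance with the supporting functional as a parameter -/
def bE {X : Type*} [NormedAddCommGroup X] [NormedSpace ℝ X] (p : ℝ) (x y : X)
    (f : X →L[ℝ] ℝ) : ℝ :=
  1 / p * ‖x‖ ^ p + (1 - 1 / p) * ‖y‖ ^ p - ‖y‖ ^ (p - 1) * f x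

theorem bE_eq {X : Type*} [NormedAddCommGroup X] [NormedSpace ℝ X] (p : ℝ) (x y : X)
    (f : X →L[ℝ] ℝ) : bE p x y f = sd p ‖x‖ ‖y‖ + ‖y‖ ^ (p - 1) * (‖x‖ - f x) := by
  unfold bE sd; ring

theorem bE_smul {X : Type*} [NormedAddCommGroup X] [NormedSpace ℝ X] {p : ℝ} (hp : 1 < p)
    (x y : X) (f : X →L[ℝ] ℝ) {M : ℝ} (hM : 0 < M) :
    bE p (M • x) (M • y) f = M ^ p * bE p x y f := by
  unfold bE
  rw [norm_smul, norm_smul, Real.norm_of_nonneg hM.le, Real.mul_rpow hM.le (norm_nonneg _),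
    Real.mul_rpow hM.le (norm_nonneg _), Real.mul_rpow hM.le (norm_nonneg _), map_smul,
    rpow_pred hp hM.le, smul_eq_mul]
  ring

theorem bE_upper {X : Type*} [NormedAddCommGroup X] [NormedSpace ℝ X] {C σ p : ℝ}
    (hσ : 1 < σ) (hσ2 : σ ≤ 2) (hC : 0 < C) (hp : 1 < p) (H : USx X C σ) :
    ∃ K > 0, ∀ (x y : X) (f : X →L[ℝ] ℝ), (∀ x, |f x| ≤ ‖x‖) → f y = ‖y‖ →
      max ‖x‖ ‖y‖ = 1 → bE p x y f ≤ K * ‖x - y‖ ^ σ := by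
  obtain ⟨K, hK, hsd⟩ := sd_upper hp
  refine ⟨K + C * 2 ^ σ + 2 * 2 ^ σ, by positivity, fun x y f hf hf2 hM => ?_⟩
  have hx1 : ‖x‖ ≤ 1 := hM ▸ le_max_left _ _
  have hy1 : ‖y‖ ≤ 1 := hM ▸ le_max_right _ _
  set d := ‖x - y‖ with hd
  have hd0 : 0 ≤ d := norm_nonneg _
  have hds : 0 ≤ d ^ σ := by positivity
  rcases le_or_gt (1 / 2) d with h | h
  · have b1 : ‖x‖ ^ p ≤ 1 := Real.rpow_le_one (norm_nonneg _) hx1 (by linarith)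
    have b2 : ‖y‖ ^ p ≤ 1 := Real.rpow_le_one (norm_nonneg _) hy1 (by linarith)
    have b3 : ‖y‖ ^ (p - 1) ≤ 1 := Real.rpow_le_one (norm_nonneg _) hy1 (by linarith)
    have b30 : 0 ≤ ‖y‖ ^ (p - 1) := by positivity
    have b4 : - f x ≤ 1 := (neg_le_abs _).trans ((hf x).trans hx1)
    have p1 : 0 ≤ 1 / p := by positivity
    have p2 : 0 ≤ 1 - 1 / p := by
      rw [sub_nonneg, div_le_one (by linarith)]; exact hp.le
    have hE : bE p x y f ≤ 2 := by
      unfold bE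
      have := mul_le_mul_of_nonneg_left b1 p1
      have := mul_le_mul_of_nonneg_left b2 p2
      nlinarith
    have h1 : 1 ≤ (2 * d) ^ σ := Real.one_le_rpow (by linarith) (by linarith)
    rw [Real.mul_rpow (by norm_num) hd0] at h1
    have : 0 ≤ (K + C * 2 ^ σ) * d ^ σ := by positivity
    nlinarith
  · have t1 : |‖x‖ - ‖y‖| ≤ d := abs_norm_sub_norm_le x y
    have t2 := abs_le.1 t1
    have hx2 : 1 / 2 ≤ ‖x‖ := by
      rcases max_choice ‖x‖ ‖y‖ with h' | h' <;> linarith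
    have hy2 : 1 / 2 ≤ ‖y‖ := by
      rcases max_choice ‖x‖ ‖y‖ with h' | h' <;> linarith
    have hy0 : 0 < ‖y‖ := by linarith
    have e1 := hsd _ _ ⟨hx2, hx1⟩ ⟨hy2, hy1⟩
    have e2 : (‖x‖ - ‖y‖) ^ 2 ≤ d ^ σ := by
      calc (‖x‖ - ‖y‖) ^ 2 = |‖x‖ - ‖y‖| ^ 2 := (sq_abs _).symm
        _ ≤ d ^ 2 := by gcongr
        _ = d ^ (2 : ℝ) := (Real.rpow_two d).symm
        _ ≤ d ^ σ := by
          rcases hd0.eq_or_lt with h0 | h0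
          · rw [← h0, Real.zero_rpow (by norm_num), Real.zero_rpow (by linarith)]
          · exact Real.rpow_le_rpow_of_exponent_ge h0 (by linarith) hσ2
    have e3 := usx_support H f hf hf2 (x - y) (norm_pos_iff.1 hy0) (by linarith)
    rw [add_sub_cancel, map_sub, hf2, ← hd] at e3
    have e4 : C * ‖y‖ * (d / ‖y‖) ^ σ ≤ C * 1 * (2 * d) ^ σ := by
      gcongr
      rw [div_le_iff₀ hy0]; nlinarith
    rw [Real.mul_rpow (by norm_num) hd0] at e4
    have b3 : ‖y‖ ^ (p - 1) ≤ 1 := Real.rpow_le_one (norm_nonneg _) hy1 (by linarith)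
    have b30 : 0 ≤ ‖y‖ ^ (p - 1) := by positivity
    have e5 : 0 ≤ ‖x‖ - f x := sub_nonneg.2 ((le_abs_self _).trans (hf x))
    rw [bE_eq]
    have e6 : ‖y‖ ^ (p - 1) * (‖x‖ - f x) ≤ 1 * (‖x‖ - f x) := by gcongr
    have e7 : K * (‖x‖ - ‖y‖) ^ 2 ≤ K * d ^ σ := by gcongr
    have : 0 ≤ 2 * 2 ^ σ * d ^ σ := by positivity
    nlinarith

theorem bE_lower {X : Type*} [NormedAddCommGroup X] [NormedSpace ℝ X] {c ρ p : ℝ}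
    (hρ : 2 ≤ ρ) (hc : 0 < c) (hp : 1 < p) (H : UCx X c ρ) :
    ∃ k > 0, ∀ (x y : X) (f : X →L[ℝ] ℝ), (∀ x, |f x| ≤ ‖x‖) → f y = ‖y‖ →
      max ‖x‖ ‖y‖ = 1 → k * ‖x - y‖ ^ ρ ≤ bE p x y f := by
  obtain ⟨k, hk, hsd⟩ := sd_lower hp
  set A := (1 / 2 : ℝ) ^ (p - 1) * c with hA
  have hA0 : 0 < A := by positivity
  set m := min (k / 4) A with hm
  have hm0 : 0 < m := lt_min (by positivity) hA0
  have hmk : m ≤ k / 4 := min_le_left _ _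
  have hmA : m ≤ A := min_le_right _ _
  refine ⟨m / 2 ^ ρ, by positivity, fun x y f hf hf2 hM => ?_⟩
  have hx1 : ‖x‖ ≤ 1 := hM ▸ le_max_left _ _
  have hy1 : ‖y‖ ≤ 1 := hM ▸ le_max_right _ _
  have hs := hsd _ _ (norm_nonneg x) (norm_nonneg y) hM
  have e5 : 0 ≤ ‖x‖ - f x := sub_nonneg.2 ((le_abs_self _).trans (hf x))
  have b30 : 0 ≤ ‖y‖ ^ (p - 1) := by positivity
  rw [bE_eq]
  have hd2 : ‖x - y‖ ≤ 2 := (norm_sub_le x y).trans (by linarith)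
  by_cases hsmall : ‖x‖ < 1 / 2 ∨ ‖y‖ < 1 / 2
  · have q1 : 1 / 4 ≤ (‖x‖ - ‖y‖) ^ 2 := by
      rcases max_choice ‖x‖ ‖y‖ with h' | h' <;> rcases hsmall with h | h <;> nlinarith
    have q2 : ‖x - y‖ ^ ρ ≤ 2 ^ ρ := by gcongr
    have q3 : m / 2 ^ ρ * ‖x - y‖ ^ ρ ≤ m := by
      rw [div_mul_eq_mul_div, div_le_iff₀ (by positivity)]
      gcongr
    have : 0 ≤ ‖y‖ ^ (p - 1) * (‖x‖ - f x) := by positivity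
    nlinarith
  · push Not at hsmall
    obtain ⟨hx2, hy2⟩ := hsmall
    have hx0 : 0 < ‖x‖ := by linarith
    have hy0 : 0 < ‖y‖ := by linarith
    set u := ‖x‖⁻¹ • x with hu
    set v := ‖y‖⁻¹ • y with hv
    have hu1 : ‖u‖ = 1 := by rw [hu, norm_smul, norm_inv, norm_norm, inv_mul_cancel₀ hx0.ne']
    have hv1 : ‖v‖ = 1 := by rw [hv, norm_smul, norm_inv, norm_norm, inv_mul_cancel₀ hy0.ne']
    have hxu : x = ‖x‖ • u := by rw [hu, smul_smul, mul_inv_cancel₀ hx0.ne', one_smul]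
    have hyv : y = ‖y‖ • v := by rw [hv, smul_smul, mul_inv_cancel₀ hy0.ne', one_smul]
    have hfv : f v = 1 := by rw [hv, map_smul, hf2, smul_eq_mul, inv_mul_cancel₀ hy0.ne']
    have hfx : f x = ‖x‖ * f u := by
      rw [hu, map_smul, smul_eq_mul, mul_inv_cancel_left₀ hx0.ne']
    have key := H u v hu1 hv1
    have e1 := (le_abs_self _).trans (hf (u + v))
    rw [map_add, hfv] at e1
    set w := ‖u - v‖ with hw
    have hw0 : 0 ≤ w := norm_nonneg _
    have hwr : 0 ≤ w ^ ρ := by positivity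
    have e2 : 2 * c * w ^ ρ ≤ 1 - f u := by linarith
    have e3 : c * w ^ ρ ≤ ‖x‖ - f x := by
      rw [hfx]
      have : 0 ≤ c * w ^ ρ := by positivity
      nlinarith
    have e4 : A * w ^ ρ ≤ ‖y‖ ^ (p - 1) * (‖x‖ - f x) := by
      rw [hA, mul_assoc]
      have : (1 / 2 : ℝ) ^ (p - 1) ≤ ‖y‖ ^ (p - 1) := by
        apply Real.rpow_le_rpow <;> linarith
      gcongr
    set s := |‖x‖ - ‖y‖| with hs'
    have hs0 : 0 ≤ s := abs_nonneg _
    have hs1 : s ≤ 1 := abs_le.2 ⟨by linarith, by linarith⟩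
    have hxy : ‖x - y‖ ≤ w + s := by
      have : x - y = ‖x‖ • (u - v) + (‖x‖ - ‖y‖) • v := by
        rw [smul_sub, sub_smul, ← hxu, ← hyv]; abel
      rw [this]
      refine (norm_add_le _ _).trans ?_
      rw [norm_smul, norm_smul, hv1, norm_norm, Real.norm_eq_abs]
      nlinarith
    have hsq : s ^ ρ ≤ (‖x‖ - ‖y‖) ^ 2 := by
      rw [← sq_abs, ← hs', ← Real.rpow_two]
      rcases hs0.eq_or_lt with h0 | h0
      · rw [← h0, Real.zero_rpow (show ρ ≠ 0 by linarith), Real.zero_rpow (by norm_num)]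
      · exact Real.rpow_le_rpow_of_exponent_ge h0 hs1 hρ
    have hsr : 0 ≤ s ^ ρ := by positivity
    have fin : ‖x - y‖ ^ ρ ≤ 2 ^ ρ * (w ^ ρ + s ^ ρ) := by
      have : ‖x - y‖ ≤ 2 * max w s := by
        linarith [le_max_left w s, le_max_right w s]
      calc ‖x - y‖ ^ ρ ≤ (2 * max w s) ^ ρ := by gcongr
        _ = 2 ^ ρ * (max w s) ^ ρ := Real.mul_rpow (by norm_num) (le_max_of_le_left hw0)
        _ ≤ _ := by
          gcongr
          rcases max_choice w s with h | h <;> rw [h] <;> linarith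
    calc m / 2 ^ ρ * ‖x - y‖ ^ ρ ≤ m / 2 ^ ρ * (2 ^ ρ * (w ^ ρ + s ^ ρ)) := by gcongr
      _ = m * (w ^ ρ + s ^ ρ) := by field_simp
      _ = m * w ^ ρ + m * s ^ ρ := by ring
      _ ≤ A * w ^ ρ + k * (‖x‖ - ‖y‖) ^ 2 := by
        have : m ≤ k := by linarith
        gcongr
      _ ≤ _ := by linarith

theorem breg_upper {X : Type*} [NormedAddCommGroup X] [NormedSpace ℝ X] {C σ p : ℝ}
    (hσ : 1 < σ) (hσ2 : σ ≤ 2) (hC : 0 < C) (hp : 1 < p) (H : USx X C σ) :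
    ∃ K > 0, ∀ (x y : X) (M : ℝ), 0 < M → max ‖x‖ ‖y‖ = M →
      bregmanDist p x y ≤ K * (M ^ p * (‖x - y‖ / M) ^ σ) := by
  obtain ⟨K, hK, h⟩ := bE_upper hσ hσ2 hC hp H
  refine ⟨K, hK, fun x y M hM hxy => ?_⟩
  obtain ⟨f, hf, hf2, -, hb⟩ := bregman_form hσ hC hp H y
  have e : bregmanDist p x y = bE p (M • M⁻¹ • x) (M • M⁻¹ • y) f := by
    rw [smul_inv_smul₀ hM.ne', smul_inv_smul₀ hM.ne', hb x]; rfl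
  have := h (M⁻¹ • x) (M⁻¹ • y) f hf ?_ ?_
  · rw [e, bE_smul hp _ _ _ hM]
    rw [← smul_sub, norm_smul, norm_inv, Real.norm_of_nonneg hM.le, inv_mul_eq_div] at this
    calc _ ≤ M ^ p * (K * (‖x - y‖ / M) ^ σ) := by gcongr
      _ = _ := by ring
  · rw [map_smul, hf2, norm_smul, norm_inv, Real.norm_of_nonneg hM.le, smul_eq_mul]
  · rw [norm_smul, norm_smul, norm_inv, Real.norm_of_nonneg hM.le,
      ← mul_max_of_nonneg _ _ (by positivity), hxy, inv_mul_cancel₀ hM.ne']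

theorem breg_lower {X : Type*} [NormedAddCommGroup X] [NormedSpace ℝ X] {c ρ C σ p : ℝ}
    (hσ : 1 < σ) (hC : 0 < C) (hp : 1 < p) (HS : USx X C σ)
    (hρ : 2 ≤ ρ) (hc : 0 < c) (H : UCx X c ρ) :
    ∃ k > 0, ∀ (x y : X) (M : ℝ), 0 < M → max ‖x‖ ‖y‖ = M →
      k * (M ^ p * (‖x - y‖ / M) ^ ρ) ≤ bregmanDist p x y := by
  obtain ⟨K, hK, h⟩ := bE_lower hρ hc hp H
  refine ⟨K, hK, fun x y M hM hxy => ?_⟩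
  obtain ⟨f, hf, hf2, -, hb⟩ := bregman_form hσ hC hp HS y
  have e : bregmanDist p x y = bE p (M • M⁻¹ • x) (M • M⁻¹ • y) f := by
    rw [smul_inv_smul₀ hM.ne', smul_inv_smul₀ hM.ne', hb x]; rfl
  have := h (M⁻¹ • x) (M⁻¹ • y) f hf ?_ ?_
  · rw [e, bE_smul hp _ _ _ hM]
    rw [← smul_sub, norm_smul, norm_inv, Real.norm_of_nonneg hM.le, inv_mul_eq_div] at this
    calc _ = M ^ p * (K * (‖x - y‖ / M) ^ ρ) := by ring
      _ ≤ _ := by gcongr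
  · rw [map_smul, hf2, norm_smul, norm_inv, Real.norm_of_nonneg hM.le, smul_eq_mul]
  · rw [norm_smul, norm_smul, norm_inv, Real.norm_of_nonneg hM.le,
      ← mul_max_of_nonneg _ _ (by positivity), hxy, inv_mul_cancel₀ hM.ne']

theorem two_dim_bound {X : Type*} [NormedAddCommGroup X] [NormedSpace ℝ X] {u v : X}
    (hu : ‖u‖ = 1) (hv : ‖v‖ = 1) (h1 : u ≠ v) (h2 : u ≠ -v) :
    ∃ m > 0, ∀ a b : ℝ, m * |a| ≤ ‖a • u + b • v‖ ∧ m * |b| ≤ ‖a • u + b • v‖ := by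
  have hu0 : u ≠ 0 := by rintro rfl; simp at hu
  have hli : LinearIndependent ℝ ![u, v] := by
    rw [LinearIndependent.pair_iff' hu0]
    intro a ha
    have : |a| = 1 := by
      have := congrArg norm ha
      rwa [norm_smul, hu, hv, mul_one, Real.norm_eq_abs] at this
    rcases eq_or_eq_neg_of_abs_eq this with rfl | rfl
    · exact h1 (by simpa using ha)
    · exact h2 (by rw [← ha]; simp)
  have hker : Function.Injective (Fintype.linearCombination ℝ ![u, v]) := by
    exact hli.fintypeLinearCombination_injective
  obtain ⟨K, hK, hL⟩ := LinearMap.exists_antilipschitzWith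
    (Fintype.linearCombination ℝ ![u, v])
    (LinearMap.ker_eq_bot.2 hker)
  have hK' : (0 : ℝ) < K := hK
  refine ⟨(K : ℝ)⁻¹, by positivity, fun a b => ?_⟩
  have key := hL.le_mul_dist ![a, b] 0
  rw [map_zero, dist_zero_right, dist_zero_right] at key
  have e : Fintype.linearCombination ℝ ![u, v] ![a, b] = a • u + b • v := by
    simp [Fintype.linearCombination_apply]
  rw [e] at key
  have ka : |a| ≤ ‖![a, b]‖ := by simpa using norm_le_pi_norm ![a, b] 0
  have kb : |b| ≤ ‖![a, b]‖ := by simpa using norm_le_pi_norm ![a, b] 1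
  constructor <;> rw [inv_mul_le_iff₀ hK'] <;> linarith

theorem doubling_upper (f : ℝ → ℝ) (h A : ℝ)
    (H : ∀ t, f (t + h) + f (t - h) - 2 * f t ≤ A) (k : ℕ) :
    ∀ t, f (t + 2 ^ k * h) + f (t - 2 ^ k * h) - 2 * f t ≤ 4 ^ k * A := by
  induction k with
  | zero => simpa using H
  | succ k ih =>
    intro t
    have a1 := ih (t + 2 ^ k * h)
    have a2 := ih t
    have a3 := ih (t - 2 ^ k * h)
    have e1 : t + 2 ^ k * h + 2 ^ k * h = t + 2 ^ (k + 1) * h := by ring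
    have e2 : t - 2 ^ k * h - 2 ^ k * h = t - 2 ^ (k + 1) * h := by ring
    rw [e1, add_sub_cancel_right] at a1
    rw [e2, sub_add_cancel] at a3
    rw [pow_succ 4]
    linarith

theorem doubling_lower (f : ℝ → ℝ) (h A B : ℝ) (hh : 0 ≤ h)
    (H : ∀ t, |t| ≤ B → A ≤ f (t + h) + f (t - h) - 2 * f t) (k : ℕ) :
    ∀ t, |t| + 2 ^ k * h ≤ B → 4 ^ k * A ≤ f (t + 2 ^ k * h) + f (t - 2 ^ k * h) - 2 * f t := by
  induction k with
  | zero =>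
    intro t ht
    simpa using H t (by linarith)
  | succ k ih =>
    intro t ht
    have hk : 0 ≤ 2 ^ k * h := by positivity
    have ht' : |t| + 2 ^ k * h + 2 ^ k * h ≤ B := by rw [pow_succ] at ht; linarith
    have b1 : |t + 2 ^ k * h| ≤ |t| + 2 ^ k * h := by
      simpa [abs_of_nonneg hk] using abs_add_le t (2 ^ k * h)
    have b2 : |t - 2 ^ k * h| ≤ |t| + 2 ^ k * h := by
      simpa [abs_of_nonneg hk] using abs_sub t (2 ^ k * h)
    have a1 := ih (t + 2 ^ k * h) (by linarith)
    have a2 := ih t (by linarith)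
    have a3 := ih (t - 2 ^ k * h) (by linarith)
    have e1 : t + 2 ^ k * h + 2 ^ k * h = t + 2 ^ (k + 1) * h := by ring
    have e2 : t - 2 ^ k * h - 2 ^ k * h = t - 2 ^ (k + 1) * h := by ring
    rw [e1, add_sub_cancel_right] at a1
    rw [e2, sub_add_cancel] at a3
    rw [pow_succ 4]
    linarith

theorem four_pow_half (k : ℕ) (s : ℝ) :
    (4 : ℝ) ^ k * ((1 / 2 : ℝ) ^ k) ^ s = ((2 : ℝ) ^ (2 - s)) ^ k := by
  have e : ((1 / 2 : ℝ) ^ k) ^ s = ((1 / 2 : ℝ) ^ s) ^ k := by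
    rw [← Real.rpow_natCast (1 / 2), ← Real.rpow_mul (by norm_num), mul_comm,
      Real.rpow_mul (by norm_num), Real.rpow_natCast]
  rw [e, ← mul_pow]
  congr 1
  rw [Real.rpow_sub (by norm_num), Real.div_rpow (by norm_num) (by norm_num)]
  norm_num
  ring

theorem sigma_le_two {X : Type*} [NormedAddCommGroup X] [NormedSpace ℝ X] {C σ : ℝ}
    (hC : 0 < C) (H : USx X C σ) {u v : X}
    (hu : ‖u‖ = 1) (hv : ‖v‖ = 1) (h1 : u ≠ v) (h2 : u ≠ -v) : σ ≤ 2 := by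
  by_contra hσ
  push Not at hσ
  obtain ⟨m, hm, hb⟩ := two_dim_bound hu hv h1 h2
  set f : ℝ → ℝ := fun t => ‖u + t • v‖ with hf
  have hfm : ∀ t, m ≤ f t := fun t => by simpa using (hb 1 t).1
  set K := C * m ^ (1 - σ) with hK
  have hΔ : ∀ h, 0 ≤ h → h ≤ m → ∀ t, f (t + h) + f (t - h) - 2 * f t ≤ K * h ^ σ := by
    intro h h0 hhm t
    have hft : 0 < f t := hm.trans_le (hfm t)
    have nh : ‖h • v‖ = h := by rw [norm_smul, hv, mul_one, Real.norm_of_nonneg h0]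
    have := H (u + t • v) (h • v) (norm_pos_iff.1 hft) (by rw [nh]; exact hhm.trans (hfm t))
    rw [nh] at this
    have e1 : u + t • v + h • v = u + (t + h) • v := by rw [add_smul, add_assoc]
    have e2 : u + t • v - h • v = u + (t - h) • v := by rw [sub_smul, add_sub_assoc]
    rw [e1, e2] at this
    refine this.trans ?_
    change C * f t * (h / f t) ^ σ ≤ _
    rw [Real.div_rpow h0 hft.le]
    have e3 : C * f t * (h ^ σ / f t ^ σ) = C * f t ^ (1 - σ) * h ^ σ := by
      rw [Real.rpow_sub hft, Real.rpow_one]; ring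
    rw [e3, hK]
    have : f t ^ (1 - σ) ≤ m ^ (1 - σ) :=
      Real.rpow_le_rpow_of_nonpos hm (hfm t) (by linarith)
    gcongr
  have hlim : Tendsto (fun k : ℕ => K * 4 ^ σ * ((2 : ℝ) ^ (2 - σ)) ^ k) atTop (𝓝 0) := by
    have : Tendsto (fun k : ℕ => ((2 : ℝ) ^ (2 - σ)) ^ k) atTop (𝓝 0) :=
      tendsto_pow_atTop_nhds_zero_of_lt_one (by positivity)
        (Real.rpow_lt_one_of_one_lt_of_neg (by norm_num) (by linarith))
    simpa using this.const_mul (K * 4 ^ σ)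
  have hlim2 : Tendsto (fun k : ℕ => 4 * (1 / 2 : ℝ) ^ k) atTop (𝓝 0) := by
    simpa using (tendsto_pow_atTop_nhds_zero_of_lt_one (r := (1 / 2 : ℝ)) (by norm_num)
      (by norm_num)).const_mul 4
  obtain ⟨k, hk1, hk2⟩ := ((hlim.eventually (gt_mem_nhds one_pos)).and
    (hlim2.eventually (gt_mem_nhds hm))).exists
  have := doubling_upper f (4 * (1 / 2) ^ k) _ (hΔ _ (by positivity) hk2.le) k 0
  have e : (2 : ℝ) ^ k * (4 * (1 / 2) ^ k) = 4 := by
    rw [mul_left_comm, ← mul_pow]; norm_num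
  rw [e, Real.mul_rpow (by norm_num) (by positivity)] at this
  have e2 : (4 : ℝ) ^ k * (K * (4 ^ σ * ((1 / 2) ^ k) ^ σ))
      = K * 4 ^ σ * ((2 : ℝ) ^ (2 - σ)) ^ k := by
    rw [← four_pow_half]; ring
  rw [e2] at this
  have f0 : f 0 = 1 := by simp [hf, hu]
  have f4 : 3 ≤ f (0 + 4) := by
    have := norm_sub_le (u + (4 : ℝ) • v) u
    rw [add_sub_cancel_left, norm_smul, hv, hu] at this
    norm_num at this
    simp only [hf, zero_add]
    linarith
  have f5 : 3 ≤ f (0 - 4) := by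
    have := norm_sub_le (u + (-4 : ℝ) • v) u
    rw [add_sub_cancel_left, norm_smul, hv, hu] at this
    norm_num at this
    simp only [hf, zero_sub, neg_smul]
    linarith
  linarith

theorem ucx_general {X : Type*} [NormedAddCommGroup X] [NormedSpace ℝ X] {c ρ : ℝ}
    (H : UCx X c ρ) {a b : X} (ha : a ≠ 0) (hb : b ≠ 0) (hab : ‖b‖ ≤ ‖a‖) :
    2 * ‖b‖ * (c * ‖‖a‖⁻¹ • a - ‖b‖⁻¹ • b‖ ^ ρ) ≤ ‖a‖ + ‖b‖ - ‖a + b‖ := by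
  have hx0 : 0 < ‖a‖ := norm_pos_iff.2 ha
  have hy0 : 0 < ‖b‖ := norm_pos_iff.2 hb
  set u := ‖a‖⁻¹ • a with hu
  set v := ‖b‖⁻¹ • b with hv
  have hu1 : ‖u‖ = 1 := by rw [hu, norm_smul, norm_inv, norm_norm, inv_mul_cancel₀ hx0.ne']
  have hv1 : ‖v‖ = 1 := by rw [hv, norm_smul, norm_inv, norm_norm, inv_mul_cancel₀ hy0.ne']
  have hxu : a = ‖a‖ • u := by rw [hu, smul_smul, mul_inv_cancel₀ hx0.ne', one_smul]
  have hyv : b = ‖b‖ • v := by rw [hv, smul_smul, mul_inv_cancel₀ hy0.ne', one_smul]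
  have key := H u v hu1 hv1
  have e : a + b = ‖b‖ • (u + v) + (‖a‖ - ‖b‖) • u := by
    rw [smul_add, sub_smul, ← hxu, ← hyv]; abel
  have n := norm_add_le (‖b‖ • (u + v)) ((‖a‖ - ‖b‖) • u)
  rw [← e, norm_smul, norm_smul, hu1, norm_norm, Real.norm_of_nonneg (by linarith)] at n
  nlinarith

theorem two_le_rho {X : Type*} [NormedAddCommGroup X] [NormedSpace ℝ X] {c ρ : ℝ}
    (hc : 0 < c) (hρ : 0 < ρ) (H : UCx X c ρ) {u v : X}
    (hu : ‖u‖ = 1) (hv : ‖v‖ = 1) (h1 : u ≠ v) (h2 : u ≠ -v) : 2 ≤ ρ := by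
  by_contra hlt
  push Not at hlt
  obtain ⟨m, hm, hb⟩ := two_dim_bound hu hv h1 h2
  set f : ℝ → ℝ := fun t => ‖u + t • v‖ with hf
  have hfm : ∀ t, m ≤ f t := fun t => by simpa using (hb 1 t).1
  have hf3 : ∀ t, |t| ≤ 2 → f t ≤ 3 := fun t ht => by
    have := norm_add_le u (t • v)
    rw [norm_smul, hu, hv, Real.norm_eq_abs] at this
    simp only [hf]; linarith
  set K := 2 * m * (c * (m / 9 * 2) ^ ρ) with hK
  have hK0 : 0 < K := by positivity
  have hdist : ∀ t r : ℝ, |t| ≤ 2 → |r| ≤ 2 →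
      m / 9 * |t - r| ≤ ‖(f t)⁻¹ • (u + t • v) - (f r)⁻¹ • (u + r • v)‖ := by
    intro t r ht hr
    have p1 := hm.trans_le (hfm t)
    have p2 := hm.trans_le (hfm r)
    have i1 : 1 / 3 ≤ (f t)⁻¹ := by
      rw [one_div]; exact inv_anti₀ p1 (hf3 t ht)
    have e : (f t)⁻¹ • (u + t • v) - (f r)⁻¹ • (u + r • v)
        = ((f t)⁻¹ - (f r)⁻¹) • u + ((f t)⁻¹ * t - (f r)⁻¹ * r) • v := by
      module
    rw [e]
    set s := (f t)⁻¹ - (f r)⁻¹ with hs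
    have e2 : (f t)⁻¹ * t - (f r)⁻¹ * r = (f t)⁻¹ * (t - r) + s * r := by rw [hs]; ring
    rw [e2]
    obtain ⟨q1, q2⟩ := hb s ((f t)⁻¹ * (t - r) + s * r)
    set N := ‖s • u + ((f t)⁻¹ * (t - r) + s * r) • v‖
    have q3 : |(f t)⁻¹ * (t - r)| ≤ |(f t)⁻¹ * (t - r) + s * r| + |s * r| := by
      have := abs_sub ((f t)⁻¹ * (t - r) + s * r) (s * r)
      simpa using this
    rw [abs_mul, abs_mul s, abs_of_pos (inv_pos.2 p1)] at q3
    have q4 : 1 / 3 * |t - r| ≤ (f t)⁻¹ * |t - r| := by gcongr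
    have q5 : |s| * |r| ≤ |s| * 2 := by gcongr
    have q6 := mul_le_mul_of_nonneg_left (q4.trans (q3.trans (by gcongr :
      _ ≤ |(f t)⁻¹ * (t - r) + s * r| + |s| * 2))) hm.le
    linarith
  have hΔ : ∀ h, 0 ≤ h → h ≤ 1 → ∀ t, |t| ≤ 1 →
      K * h ^ ρ ≤ f (t + h) + f (t - h) - 2 * f t := by
    intro h h0 hh1 t ht
    have ht' := abs_le.1 ht
    have k1 : |t + h| ≤ 2 := abs_le.2 ⟨by linarith, by linarith⟩
    have k2 : |t - h| ≤ 2 := abs_le.2 ⟨by linarith, by linarith⟩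
    have sumab : ‖(u + (t + h) • v) + (u + (t - h) • v)‖ = 2 * f t := by
      have : (u + (t + h) • v) + (u + (t - h) • v) = (2 : ℝ) • (u + t • v) := by module
      rw [this, norm_smul]; norm_num
      rfl
    have gen : ∀ a b : ℝ, |a| ≤ 2 → |b| ≤ 2 → |a - b| = 2 * h → f b ≤ f a →
        K * h ^ ρ ≤ f a + f b - ‖(u + a • v) + (u + b • v)‖ := by
      intro a b ha hb' hab hfab
      have d := hdist a b ha hb'
      have pa := hm.trans_le (hfm a)
      have pb := hm.trans_le (hfm b)
      have g := ucx_general H (norm_pos_iff.1 pa) (norm_pos_iff.1 pb) hfab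
      refine le_trans ?_ g
      rw [hab] at d
      have : K * h ^ ρ = 2 * m * (c * (m / 9 * (2 * h)) ^ ρ) := by
        rw [hK, ← mul_assoc (m / 9), Real.mul_rpow (by positivity) h0]; ring
      rw [this]
      change _ ≤ 2 * f b * (c * ‖(f a)⁻¹ • (u + a • v) - (f b)⁻¹ • (u + b • v)‖ ^ ρ)
      have := hfm b
      gcongr
    rcases le_total (f (t - h)) (f (t + h)) with hle | hle
    · have := gen (t + h) (t - h) k1 k2 (by
        rw [show t + h - (t - h) = 2 * h by ring, abs_of_nonneg (by linarith)]) hle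
      rwa [sumab] at this
    · have := gen (t - h) (t + h) k2 k1 (by
        rw [show t - h - (t + h) = -(2 * h) by ring, abs_neg, abs_of_nonneg (by linarith)]) hle
      rw [add_comm (u + (t - h) • v), sumab] at this
      linarith
  have hlim : Tendsto (fun k : ℕ => ((2 : ℝ) ^ (2 - ρ)) ^ k) atTop atTop :=
    tendsto_pow_atTop_atTop_of_one_lt (Real.one_lt_rpow (by norm_num) (by linarith))
  obtain ⟨k, hk⟩ := (hlim.eventually_gt_atTop (6 / K)).exists
  have hle1 : (1 / 2 : ℝ) ^ k ≤ 1 := pow_le_one₀ (by norm_num) (by norm_num)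
  have e : (2 : ℝ) ^ k * (1 / 2) ^ k = 1 := by
    rw [← mul_pow]; norm_num
  have := doubling_lower f ((1 / 2) ^ k) _ 1 (by positivity)
    (hΔ _ (by positivity) hle1) k 0 (by rw [e]; simp)
  rw [e] at this
  have e2 : (4 : ℝ) ^ k * (K * ((1 / 2) ^ k) ^ ρ) = K * ((2 : ℝ) ^ (2 - ρ)) ^ k := by
    rw [← four_pow_half]; ring
  rw [e2] at this
  rw [div_lt_iff₀ hK0] at hk
  have := hf3 (0 + 1) (by norm_num)
  have := hf3 (0 - 1) (by norm_num)
  have := hfm 0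
  linarith

theorem one_dim_us {X : Type*} [NormedAddCommGroup X] [NormedSpace ℝ X]
    (h : ∀ u v : X, ‖u‖ = 1 → ‖v‖ = 1 → u = v ∨ u = -v) : PowerSmooth X 2 := by
  refine ⟨by norm_num, 1, one_pos, fun τ hτ => ?_⟩
  have : modSmooth X τ ≤ 0 := by
    refine Real.sSup_nonpos ?_
    rintro d ⟨x, y, hx, hy, rfl⟩
    have h0 : 0 ≤ 1 - τ := by linarith [hτ.2]
    have h1 : 0 ≤ 1 + τ := by linarith [hτ.1]
    have e1 : x + τ • x = (1 + τ) • x := by module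
    have e2 : x - τ • x = (1 - τ) • x := by module
    have e3 : y = x ∨ y = -x := h y x hy hx
    have n1 : ‖x + τ • x‖ = 1 + τ := by
      rw [e1, norm_smul, hx, Real.norm_of_nonneg h1, mul_one]
    have n2 : ‖x - τ • x‖ = 1 - τ := by
      rw [e2, norm_smul, hx, Real.norm_of_nonneg h0, mul_one]
    rcases e3 with rfl | rfl
    · rw [n1, n2]; linarith
    · rw [smul_neg, sub_neg_eq_add, ← sub_eq_add_neg, n1, n2]; linarith
  have : 0 ≤ 1 * τ ^ (2 : ℝ) := by
    have := hτ.1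
    positivity
  linarith

theorem one_dim_uc {X : Type*} [NormedAddCommGroup X] [NormedSpace ℝ X]
    (h : ∀ u v : X, ‖u‖ = 1 → ‖v‖ = 1 → u = v ∨ u = -v) : UCx X (1 / 4) 2 := by
  intro u v hu hv
  rcases h u v hu hv with rfl | rfl
  · rw [sub_self, norm_zero, Real.zero_rpow (by norm_num), ← two_smul ℝ u, norm_smul, hu]
    norm_num
  · have : -v - v = (-2 : ℝ) • v := by module
    rw [this, norm_smul, hv]
    norm_num

end Helpers

theorem statement2 {X : Type*} [NormedAddCommGroup X] [NormedSpace ℝ X] [CompleteSpace X]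
    (ρ σ p : ℝ) (hconv : PowerConvex X ρ) (hsmooth : PowerSmooth X σ)
    (hp : 1 < p) (hσp : σ ≤ p) (hpρ : p ≤ ρ) :
    ∀ R > (0 : ℝ), ∃ C > (0 : ℝ), ∀ x y : X, ‖x‖ < R → ‖y‖ < R →
      bregmanDist p x y ≤ C * (bregmanDist p y x) ^ (σ / ρ) := by
  intro R hR
  have hσ1 : 1 < σ := hsmooth.1
  have hρ0 : 0 < ρ := by linarith
  have hσρ0 : 0 < σ / ρ := by positivity
  have hσρ1 : σ / ρ ≤ 1 := by rw [div_le_one hρ0]; linarith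
  obtain ⟨C, hC, HS⟩ := usx_of_powerSmooth hsmooth
  obtain ⟨c, hc, HC⟩ := ucx_of_powerConvex hconv
  have hM0 : ∀ x y : X, ¬ 0 < max ‖x‖ ‖y‖ → x = 0 ∧ y = 0 := by
    intro x y h
    push Not at h
    exact ⟨norm_le_zero_iff.1 ((le_max_left _ _).trans h),
      norm_le_zero_iff.1 ((le_max_right _ _).trans h)⟩
  have hzero : bregmanDist p (0 : X) 0 = 0 := by simp [bregmanDist]
  by_cases hdim : ∀ u v : X, ‖u‖ = 1 → ‖v‖ = 1 → u = v ∨ u = -v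
  · obtain ⟨C2, hC2, HS2⟩ := usx_of_powerSmooth (one_dim_us hdim)
    obtain ⟨K, hK, hup⟩ := breg_upper (by norm_num) le_rfl hC2 hp HS2
    obtain ⟨k, hk, hlo⟩ := breg_lower (by norm_num) hC2 hp HS2 le_rfl
      (by norm_num) (one_dim_uc hdim)
    set B := K * (R ^ p * 4) with hB
    have hB0 : 0 < B := by positivity
    refine ⟨K / k * B ^ (1 - σ / ρ), by positivity, fun x y hx hy => ?_⟩
    by_cases hM : 0 < max ‖x‖ ‖y‖
    swap
    · obtain ⟨rfl, rfl⟩ := hM0 x y hM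
      rw [hzero, Real.zero_rpow hσρ0.ne', mul_zero]
    set M := max ‖x‖ ‖y‖ with hMd
    have hMR : M < R := max_lt hx hy
    have u1 := hup x y M hM rfl
    have u2 := hup y x M hM (max_comm _ _)
    have l2 := hlo y x M hM (max_comm _ _)
    rw [norm_sub_rev y x] at u2 l2
    set D := bregmanDist p y x with hD
    set T := M ^ p * (‖x - y‖ / M) ^ (2 : ℝ) with hT
    have hT0 : 0 ≤ T := by positivity
    have hD0 : 0 ≤ D := le_trans (by positivity) l2
    have hDB : D ≤ B := by
      refine u2.trans ?_
      have : ‖x - y‖ / M ≤ 2 := by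
        rw [div_le_iff₀ hM]
        have := norm_sub_le x y
        linarith [le_max_left ‖x‖ ‖y‖, le_max_right ‖x‖ ‖y‖]
      have : (‖x - y‖ / M) ^ (2 : ℝ) ≤ 4 := by
        calc (‖x - y‖ / M) ^ (2 : ℝ) ≤ 2 ^ (2 : ℝ) := by gcongr
          _ = 4 := by norm_num
      rw [hB, hT]
      gcongr
    have hDpow : D ≤ B ^ (1 - σ / ρ) * D ^ (σ / ρ) := by
      rcases hD0.eq_or_lt with h0 | h0
      · rw [← h0, Real.zero_rpow hσρ0.ne', mul_zero]
      · calc D = D ^ (1 - σ / ρ) * D ^ (σ / ρ) := by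
              rw [← Real.rpow_add h0]; simp
          _ ≤ _ := by
            have : 0 ≤ 1 - σ / ρ := by linarith
            gcongr
    calc bregmanDist p x y ≤ K * T := u1
      _ = K / k * (k * T) := by field_simp
      _ ≤ K / k * (B ^ (1 - σ / ρ) * D ^ (σ / ρ)) := by
        have := l2.trans hDpow
        gcongr
      _ = _ := by ring
  · push Not at hdim
    obtain ⟨u, v, hu, hv, h1, h2⟩ := hdim
    have hσ2 := sigma_le_two hC HS hu hv h1 h2
    have hρ2 := two_le_rho hc hρ0 HC hu hv h1 h2
    obtain ⟨K, hK, hup⟩ := breg_upper hσ1 hσ2 hC hp HS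
    obtain ⟨k, hk, hlo⟩ := breg_lower hσ1 hC hp HS hρ2 hc HC
    set k' := k * R ^ (p - ρ) with hk'
    have hk'0 : 0 < k' := by positivity
    refine ⟨K * R ^ (p - σ) / k' ^ (σ / ρ), by positivity, fun x y hx hy => ?_⟩
    by_cases hM : 0 < max ‖x‖ ‖y‖
    swap
    · obtain ⟨rfl, rfl⟩ := hM0 x y hM
      rw [hzero, Real.zero_rpow hσρ0.ne', mul_zero]
    set M := max ‖x‖ ‖y‖ with hMd
    have hMR : M < R := max_lt hx hy
    have u1 := hup x y M hM rfl
    have l2 := hlo y x M hM (max_comm _ _)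
    rw [norm_sub_rev y x] at l2
    set D := bregmanDist p y x with hD
    set d := ‖x - y‖ with hd
    have hd0 : 0 ≤ d := norm_nonneg _
    have e : ∀ s : ℝ, M ^ p * (d / M) ^ s = M ^ (p - s) * d ^ s := fun s => by
      rw [Real.div_rpow hd0 hM.le, Real.rpow_sub hM]; ring
    rw [e] at u1 l2
    have l3 : k' * d ^ ρ ≤ D := by
      refine le_trans ?_ l2
      rw [hk', mul_assoc]
      have : R ^ (p - ρ) ≤ M ^ (p - ρ) :=
        Real.rpow_le_rpow_of_nonpos hM hMR.le (by linarith)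
      gcongr
    have u3 : bregmanDist p x y ≤ K * R ^ (p - σ) * d ^ σ := by
      refine u1.trans ?_
      rw [mul_assoc]
      have : M ^ (p - σ) ≤ R ^ (p - σ) :=
        Real.rpow_le_rpow hM.le hMR.le (by linarith)
      gcongr
    have l4 : k' ^ (σ / ρ) * d ^ σ ≤ D ^ (σ / ρ) := by
      have : (k' * d ^ ρ) ^ (σ / ρ) ≤ D ^ (σ / ρ) := by gcongr
      rw [Real.mul_rpow hk'0.le (by positivity), ← Real.rpow_mul hd0,
        mul_div_cancel₀ _ hρ0.ne'] at this
      exact this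
    calc bregmanDist p x y ≤ K * R ^ (p - σ) * d ^ σ := u3
      _ = K * R ^ (p - σ) / k' ^ (σ / ρ) * (k' ^ (σ / ρ) * d ^ σ) := by field_simp
      _ ≤ _ := by gcongr
end
end

section
/- Let X be a real Banach space that is 2-convex and 2-smooth. Then there exist constants C, C', C̃ > 0 such that for ALL x, y ∈ X (without any boundedness restriction): D_2(x,y) ≤ C‖x−y‖², D_2(x,y) ≥ C'‖x−y‖², and D_2(x,y) ≤ C̃ · D_2(y,x). -/
open Filter Topology

noncomputable section

variable {X : Type*} [NormedAddCommGroup X] [NormedSpace ℝ X]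

theorem smooth_unit {X : Type*} [NormedAddCommGroup X] [NormedSpace ℝ X] {C : ℝ}
    (hC : ∀ τ ∈ Set.Icc (0 : ℝ) 1, modSmooth X τ ≤ C * τ ^ (2 : ℝ))
    (u v : X) (hu : ‖u‖ = 1) (hv : ‖v‖ = 1) (τ : ℝ) (h0 : 0 ≤ τ) (h1 : τ ≤ 1) :
    ‖u + τ • v‖ + ‖u - τ • v‖ ≤ 2 + 2 * C * τ ^ 2 := by
  have h := hC τ ⟨h0, h1⟩
  rw [Real.rpow_two] at h
  have h2 : (‖u + τ • v‖ + ‖u - τ • v‖) / 2 - 1 ≤ modSmooth X τ := by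
    apply le_csSup
    · refine ⟨τ, ?_⟩
      rintro d ⟨x, y, hx, hy, rfl⟩
      have a := norm_add_le x (τ • y)
      have b := norm_sub_le x (τ • y)
      rw [norm_smul, Real.norm_of_nonneg h0, hx, hy] at a b
      linarith
    · exact ⟨u, v, hu, hv, rfl⟩
  linarith

theorem convex_unit {X : Type*} [NormedAddCommGroup X] {c : ℝ}
    (hc : ∀ ε ∈ Set.Icc (0 : ℝ) 2, c * ε ^ (2 : ℝ) ≤ modConvex X ε)
    (u v : X) (hu : ‖u‖ = 1) (hv : ‖v‖ = 1) :
    ‖u + v‖ ≤ 2 - 2 * c * ‖u - v‖ ^ 2 := by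
  have hle : ‖u - v‖ ≤ 2 := by
    have := norm_sub_le u v
    linarith
  have h := hc ‖u - v‖ ⟨norm_nonneg _, hle⟩
  rw [Real.rpow_two] at h
  have h2 : modConvex X ‖u - v‖ ≤ 1 - ‖u + v‖ / 2 := by
    apply csInf_le
    · refine ⟨0, ?_⟩
      rintro d ⟨x, y, hx, hy, -, rfl⟩
      have a := norm_add_le x y
      linarith
    · exact ⟨u, v, hu, hv, le_rfl, rfl⟩
  linarith

theorem exists_unit_smul {X : Type*} [NormedAddCommGroup X] [NormedSpace ℝ X] {x : X}
    (hx : x ≠ 0) : ∃ u : X, ‖u‖ = 1 ∧ x = ‖x‖ • u := by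
  have hn : ‖x‖ ≠ 0 := norm_ne_zero_iff.2 hx
  refine ⟨‖x‖⁻¹ • x, ?_, ?_⟩
  · rw [norm_smul, norm_inv, norm_norm, inv_mul_cancel₀ hn]
  · rw [smul_smul, mul_inv_cancel₀ hn, one_smul]

theorem smooth_all {X : Type*} [NormedAddCommGroup X] [NormedSpace ℝ X] {C : ℝ} (hC0 : 0 < C)
    (hC : ∀ τ ∈ Set.Icc (0 : ℝ) 1, modSmooth X τ ≤ C * τ ^ (2 : ℝ)) (x h : X) :
    ‖x + h‖ ^ 2 + ‖x - h‖ ^ 2 - 2 * ‖x‖ ^ 2 ≤ (4 * C + 2 * C ^ 2 + 8) * ‖h‖ ^ 2 := by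
  have a1 := norm_add_le x h
  have b1 := norm_sub_le x h
  have a0 := norm_nonneg (x + h)
  have b0 := norm_nonneg (x - h)
  have hr := norm_nonneg x
  have hs := norm_nonneg h
  have hK : 0 ≤ (4 * C + 2 * C ^ 2) * ‖h‖ ^ 2 := by positivity
  rcases lt_or_ge ‖x‖ ‖h‖ with hlt | hge
  · have a2 : ‖x + h‖ ^ 2 ≤ (‖x‖ + ‖h‖) ^ 2 := by gcongr
    have b2 : ‖x - h‖ ^ 2 ≤ (‖x‖ + ‖h‖) ^ 2 := by gcongr
    nlinarith
  · by_cases h0 : h = 0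
    · subst h0
      simp
      linarith
    have hx0 : x ≠ 0 := by
      rintro rfl
      rw [norm_zero] at hge
      exact h0 (norm_le_zero_iff.1 hge)
    obtain ⟨u, hu, hxu⟩ := exists_unit_smul hx0
    obtain ⟨v, hv, hhv⟩ := exists_unit_smul h0
    have hrp : 0 < ‖x‖ := norm_pos_iff.2 hx0
    have key := smooth_unit hC u v hu hv (‖h‖ / ‖x‖) (by positivity) ((div_le_one hrp).2 hge)
    have e1 : ‖x + h‖ = ‖x‖ * ‖u + (‖h‖ / ‖x‖) • v‖ := by
      rw [← Real.norm_of_nonneg hr, norm_norm, ← norm_norm x, ← norm_smul, norm_norm, smul_add,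
        smul_smul, mul_div_cancel₀ _ hrp.ne', ← hxu, ← hhv]
    have e2 : ‖x - h‖ = ‖x‖ * ‖u - (‖h‖ / ‖x‖) • v‖ := by
      rw [← Real.norm_of_nonneg hr, norm_norm, ← norm_norm x, ← norm_smul, norm_norm, smul_sub,
        smul_smul, mul_div_cancel₀ _ hrp.ne', ← hxu, ← hhv]
    set q := ‖h‖ / ‖x‖ with hq
    have hq0 : 0 ≤ q := by positivity
    have hq1 : q ≤ 1 := (div_le_one hrp).2 hge
    have hqh : ‖h‖ = ‖x‖ * q := by rw [hq, mul_div_cancel₀ _ hrp.ne']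
    have hd : |‖x + h‖ - ‖x - h‖| ≤ 2 * ‖h‖ := by
      have := abs_norm_sub_norm_le (x + h) (x - h)
      have e : (x + h) - (x - h) = (2 : ℝ) • h := by rw [two_smul]; abel
      rw [e, norm_smul] at this
      simpa using this
    have hd2 : (‖x + h‖ - ‖x - h‖) ^ 2 ≤ (2 * ‖h‖) ^ 2 := by
      rw [← sq_abs]; gcongr
    have hs1 : ‖x + h‖ + ‖x - h‖ ≤ ‖x‖ * (2 + 2 * C * q ^ 2) := by
      rw [e1, e2, ← mul_add]; gcongr
    have hs2 : (‖x + h‖ + ‖x - h‖) ^ 2 ≤ (‖x‖ * (2 + 2 * C * q ^ 2)) ^ 2 := by gcongr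
    have hq4 : q ^ 4 ≤ q ^ 2 := pow_le_pow_of_le_one hq0 hq1 (by norm_num)
    have hm : ‖x‖ ^ 2 * C ^ 2 * q ^ 4 ≤ ‖x‖ ^ 2 * C ^ 2 * q ^ 2 := by gcongr
    have hh2 : ‖h‖ ^ 2 = ‖x‖ ^ 2 * q ^ 2 := by rw [hqh]; ring
    have : (‖x‖ * (2 + 2 * C * q ^ 2)) ^ 2 ≤ 4 * ‖x‖ ^ 2 + (8 * C + 4 * C ^ 2) * ‖h‖ ^ 2 := by
      rw [hh2]; nlinarith
    nlinarith [sq_nonneg ‖h‖]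

theorem convex_aux {X : Type*} [NormedAddCommGroup X] [NormedSpace ℝ X] {c : ℝ} (hc0 : 0 < c)
    (hc : ∀ ε ∈ Set.Icc (0 : ℝ) 2, c * ε ^ (2 : ℝ) ≤ modConvex X ε)
    (u v : X) (hu : ‖u‖ = 1) (hv : ‖v‖ = 1) (r s : ℝ) (hs : 0 ≤ s) (hrs : s ≤ r) :
    min (1 / 8) (c / 2) * ‖r • u - s • v‖ ^ 2 ≤
      1 / 2 * (r ^ 2 + s ^ 2) - 1 / 4 * ‖r • u + s • v‖ ^ 2 := by
  have key := convex_unit hc u v hu hv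
  have e1 : ‖r • u - s • v‖ ≤ s * ‖u - v‖ + (r - s) := by
    have e : r • u - s • v = s • (u - v) + (r - s) • u := by module
    rw [e]
    refine (norm_add_le _ _).trans ?_
    rw [norm_smul, norm_smul, hu, Real.norm_of_nonneg hs, Real.norm_of_nonneg (by linarith)]
    linarith
  have e2 : ‖r • u + s • v‖ ≤ s * ‖u + v‖ + (r - s) := by
    have e : r • u + s • v = s • (u + v) + (r - s) • u := by module
    rw [e]
    refine (norm_add_le _ _).trans ?_
    rw [norm_smul, norm_smul, hu, Real.norm_of_nonneg hs, Real.norm_of_nonneg (by linarith)]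
    linarith
  have n0 := norm_nonneg (r • u + s • v)
  have n1 := norm_nonneg (r • u - s • v)
  set N := ‖r • u + s • v‖
  set M := ‖r • u - s • v‖
  set e := ‖u - v‖
  have k1 : min (1 / 8) (c / 2) ≤ 1 / 8 := min_le_left _ _
  have k2 : min (1 / 8) (c / 2) ≤ c / 2 := min_le_right _ _
  have k0 : 0 < min (1 / 8) (c / 2) := by positivity
  set k := min (1 / 8) (c / 2)
  have hN : N ≤ r + s - 2 * c * s * e ^ 2 := by nlinarith
  have hw : 0 ≤ 2 * c * s * e ^ 2 := by positivity
  have hM : M ^ 2 ≤ 2 * (s * e) ^ 2 + 2 * (r - s) ^ 2 := by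
    have : M ^ 2 ≤ (s * e + (r - s)) ^ 2 := by gcongr
    nlinarith [sq_nonneg (s * e - (r - s))]
  have hP : 4 * c * (s * e) ^ 2 ≤ (r + s) ^ 2 - N ^ 2 := by
    have a : 2 * c * s * e ^ 2 * (2 * s) ≤ (r + s - N) * (r + s + N) := by
      apply mul_le_mul <;> linarith
    nlinarith
  have t1 : k * M ^ 2 ≤ k * (2 * (s * e) ^ 2 + 2 * (r - s) ^ 2) := by gcongr
  have t2 : k * (s * e) ^ 2 ≤ c / 2 * (s * e) ^ 2 := by gcongr
  have t3 : k * (r - s) ^ 2 ≤ 1 / 8 * (r - s) ^ 2 := by gcongr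
  nlinarith

theorem convex_le {X : Type*} [NormedAddCommGroup X] [NormedSpace ℝ X] {c : ℝ} (hc0 : 0 < c)
    (hc : ∀ ε ∈ Set.Icc (0 : ℝ) 2, c * ε ^ (2 : ℝ) ≤ modConvex X ε)
    (x y : X) (hxy : ‖y‖ ≤ ‖x‖) :
    min (1 / 8) (c / 2) * ‖x - y‖ ^ 2 ≤
      1 / 2 * (‖x‖ ^ 2 + ‖y‖ ^ 2) - 1 / 4 * ‖x + y‖ ^ 2 := by
  by_cases hx : x = 0
  · subst hx
    rw [norm_zero] at hxy
    have := norm_le_zero_iff.1 hxy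
    subst this
    simp
  obtain ⟨u, hu, hxu⟩ := exists_unit_smul hx
  obtain ⟨v, hv, hyv⟩ : ∃ v : X, ‖v‖ = 1 ∧ y = ‖y‖ • v := by
    by_cases hy : y = 0
    · exact ⟨u, hu, by simp [hy]⟩
    · exact exists_unit_smul hy
  have := convex_aux hc0 hc u v hu hv ‖x‖ ‖y‖ (norm_nonneg _) hxy
  rwa [← hxu, ← hyv] at this

theorem convex_all {X : Type*} [NormedAddCommGroup X] [NormedSpace ℝ X] {c : ℝ} (hc0 : 0 < c)
    (hc : ∀ ε ∈ Set.Icc (0 : ℝ) 2, c * ε ^ (2 : ℝ) ≤ modConvex X ε) (x y : X) :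
    min (1 / 8) (c / 2) * ‖x - y‖ ^ 2 ≤
      1 / 2 * (‖x‖ ^ 2 + ‖y‖ ^ 2) - 1 / 4 * ‖x + y‖ ^ 2 := by
  rcases le_total ‖y‖ ‖x‖ with h | h
  · exact convex_le hc0 hc x y h
  · have := convex_le hc0 hc y x h
    rw [norm_sub_rev, add_comm x y]
    linarith

/-- Subgradient of half the squared norm. -/
theorem exists_subgrad {X : Type*} [NormedAddCommGroup X] [NormedSpace ℝ X] (y : X) :
    ∃ l : X →L[ℝ] ℝ, ∀ x : X, 1 / 2 * ‖y‖ ^ 2 + l (x - y) ≤ 1 / 2 * ‖x‖ ^ 2 := by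
  by_cases hy : y = 0
  · subst hy
    exact ⟨0, fun x => by simp⟩
  obtain ⟨g, hg, hgy⟩ := exists_dual_vector ℝ y (norm_ne_zero_iff.2 hy)
  have hgy' : g y = ‖y‖ := by simpa using hgy
  refine ⟨‖y‖ • g, fun x => ?_⟩
  have h1 : g x ≤ ‖x‖ := by
    have := (le_abs_self _).trans (g.le_opNorm x)
    rwa [hg, one_mul] at this
  have h2 : ‖y‖ * g x ≤ ‖y‖ * ‖x‖ := by gcongr
  simp only [ContinuousLinearMap.smul_apply, map_sub, smul_eq_mul, hgy']
  nlinarith [sq_nonneg (‖x‖ - ‖y‖)]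

theorem duality_facts {X : Type*} [NormedAddCommGroup X] [NormedSpace ℝ X] {K : ℝ}
    (hK : ∀ x h : X, ‖x + h‖ ^ 2 + ‖x - h‖ ^ 2 - 2 * ‖x‖ ^ 2 ≤ K * ‖h‖ ^ 2) (y : X) :
    (∀ x : X, 1 / 2 * ‖y‖ ^ 2 + dualityMap 2 y (x - y) ≤ 1 / 2 * ‖x‖ ^ 2) ∧
    (∀ x : X, 1 / 2 * ‖x‖ ^ 2 ≤ 1 / 2 * ‖y‖ ^ 2 + dualityMap 2 y (x - y)
      + K / 2 * ‖x - y‖ ^ 2) := by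
  obtain ⟨l, hl⟩ := exists_subgrad y
  have hu : ∀ x : X, 1 / 2 * ‖x‖ ^ 2 ≤ 1 / 2 * ‖y‖ ^ 2 + l (x - y) + K / 2 * ‖x - y‖ ^ 2 := by
    intro x
    have h1 := hK y (x - y)
    have h2 := hl (y - (x - y))
    have e1 : y + (x - y) = x := by abel
    have e2 : y - (x - y) - y = -(x - y) := by abel
    rw [e1] at h1
    rw [e2, map_neg] at h2
    linarith
  have hd : HasFDerivAt (fun z : X => 1 / (2 : ℝ) * ‖z‖ ^ (2 : ℝ)) l y := by
    rw [hasFDerivAt_iff_isLittleO]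
    have hO : (fun x : X => 1 / (2 : ℝ) * ‖x‖ ^ (2 : ℝ) - 1 / (2 : ℝ) * ‖y‖ ^ (2 : ℝ) - l (x - y))
        =O[𝓝 y] (fun x : X => ‖x - y‖ ^ 2) := by
      apply Asymptotics.IsBigO.of_bound (K / 2)
      refine Eventually.of_forall fun x => ?_
      have a := hu x
      have b := hl x
      rw [Real.rpow_two, Real.rpow_two, Real.norm_of_nonneg (by linarith),
        Real.norm_of_nonneg (by positivity)]
      linarith
    refine hO.trans_isLittleO ?_
    have := Asymptotics.isLittleO_pow_sub_sub y (m := 2) (by norm_num)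
    exact this
  have hj : dualityMap 2 y = l := hd.fderiv
  rw [hj]
  exact ⟨hl, hu⟩

theorem statement3 {X : Type*} [NormedAddCommGroup X] [NormedSpace ℝ X] [CompleteSpace X]
    (hconv : PowerConvex X 2) (hsmooth : PowerSmooth X 2) :
    ∃ C > (0 : ℝ), ∃ C' > (0 : ℝ), ∃ Ct > (0 : ℝ), ∀ x y : X,
      bregmanDist 2 x y ≤ C * ‖x - y‖ ^ (2 : ℝ) ∧
      C' * ‖x - y‖ ^ (2 : ℝ) ≤ bregmanDist 2 x y ∧
      bregmanDist 2 x y ≤ Ct * bregmanDist 2 y x := by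
  obtain ⟨c, hc0, hc⟩ := hconv
  obtain ⟨-, C, hC0, hC⟩ := hsmooth
  have hK0 : 0 < (4 * C + 2 * C ^ 2 + 8) / 2 := by positivity
  have hk0 : 0 < min (1 / 8) (c / 2) := by positivity
  have hK := smooth_all hC0 hC
  have hk := convex_all hc0 hc
  set K := 4 * C + 2 * C ^ 2 + 8
  set k := min (1 / 8) (c / 2)
  have up : ∀ x y : X, bregmanDist 2 x y ≤ K / 2 * ‖x - y‖ ^ 2 := by
    intro x y
    have := (duality_facts hK y).2 x
    rw [bregmanDist, Real.rpow_two, Real.rpow_two]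
    linarith
  have low : ∀ x y : X, k * ‖x - y‖ ^ 2 ≤ bregmanDist 2 x y := by
    intro x y
    have h1 := (duality_facts hK y).1 ((1 / 2 : ℝ) • (x + y))
    have h2 := hk x y
    have e : (1 / 2 : ℝ) • (x + y) - y = (1 / 2 : ℝ) • (x - y) := by module
    rw [e, map_smul, norm_smul, smul_eq_mul, mul_pow, Real.norm_of_nonneg (by norm_num)] at h1
    rw [bregmanDist, Real.rpow_two, Real.rpow_two]
    linarith
  refine ⟨K / 2, hK0, k, hk0, K / 2 / k, by positivity, fun x y => ⟨?_, ?_, ?_⟩⟩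
  · rw [Real.rpow_two]; exact up x y
  · rw [Real.rpow_two]; exact low x y
  · have h1 := low y x
    rw [norm_sub_rev] at h1
    calc bregmanDist 2 x y ≤ K / 2 * ‖x - y‖ ^ 2 := up x y
      _ = K / 2 / k * (k * ‖x - y‖ ^ 2) := by field_simp
      _ ≤ K / 2 / k * bregmanDist 2 y x := by gcongr
end
end

section
/- Let X be a real Banach space that is uniformly convex and uniformly smooth, let 1 < p < ∞, and let M, N be closed linear subspaces of X. Then the following assertions are equivalent: (i) the pair (M,N) is Bregman regular; (ii) (M,N) is linear Bregman regular; (iii) (M,N) is boundedly linear Bregman regular. -/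
open Filter Topology

noncomputable section

variable {X : Type*} [NormedAddCommGroup X] [NormedSpace ℝ X]

/-- The pair `(M, N)` is Bregman regular. -/
def BregmanRegular (p : ℝ) {X : Type*} [NormedAddCommGroup X] [NormedSpace ℝ X]
    (M N : Submodule ℝ X) : Prop :=
  ∀ ε > (0 : ℝ), ∃ δ > (0 : ℝ), ∀ x : X,
    max (bregmanDistSet p (M : Set X) x) (bregmanDistSet p (N : Set X) x) < δ →
      bregmanDistSet p ((M ⊓ N : Submodule ℝ X) : Set X) x < ε

/-- The pair `(M, N)` is linear Bregman regular. -/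
def LinearBregmanRegular (p : ℝ) {X : Type*} [NormedAddCommGroup X] [NormedSpace ℝ X]
    (M N : Submodule ℝ X) : Prop :=
  ∃ κ > (0 : ℝ), ∀ x : X,
    bregmanDistSet p ((M ⊓ N : Submodule ℝ X) : Set X) x ≤
      κ * max (bregmanDistSet p (M : Set X) x) (bregmanDistSet p (N : Set X) x)

/-- The pair `(M, N)` is boundedly linear Bregman regular. -/
def BoundedlyLinearBregmanRegular (p : ℝ) {X : Type*} [NormedAddCommGroup X] [NormedSpace ℝ X]
    (M N : Submodule ℝ X) : Prop :=
  ∀ S : Set X, Bornology.IsBounded S → ∃ κ > (0 : ℝ), ∀ x ∈ S,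
    bregmanDistSet p ((M ⊓ N : Submodule ℝ X) : Set X) x ≤
      κ * max (bregmanDistSet p (M : Set X) x) (bregmanDistSet p (N : Set X) x)

theorem ucs_of_unifConvex {X : Type*} [NormedAddCommGroup X] (h : UnifConvex X) :
    UniformConvexSpace X := by
  refine ⟨fun ε hε => ?_⟩
  have hpos := h (min ε 2) (lt_min hε two_pos) (min_le_right _ _)
  refine ⟨2 * modConvex X (min ε 2), by positivity, fun x hx y hy hxy => ?_⟩
  have : modConvex X (min ε 2) ≤ 1 - ‖x + y‖ / 2 := by
    apply csInf_le
    · refine ⟨0, ?_⟩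
      rintro d ⟨a, b, ha, hb, -, rfl⟩
      have := norm_add_le a b
      linarith
    · exact ⟨x, y, hx, hy, (min_le_left _ _).trans hxy, rfl⟩
  linarith

theorem ucs_submodule {X : Type*} [NormedAddCommGroup X] [NormedSpace ℝ X]
    [UniformConvexSpace X] (M : Submodule ℝ X) : UniformConvexSpace M := by
  refine ⟨fun ε hε => ?_⟩
  obtain ⟨δ, hδ, H⟩ := UniformConvexSpace.uniform_convex (E := X) hε
  exact ⟨δ, hδ, fun x hx y hy hxy => H hx hy hxy⟩

theorem exists_attain {Y : Type*} [NormedAddCommGroup Y] [NormedSpace ℝ Y] [CompleteSpace Y]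
    [UniformConvexSpace Y] (ψ : Y →L[ℝ] ℝ) : ∃ u : Y, ‖u‖ ≤ 1 ∧ ψ u = ‖ψ‖ := by
  rcases (norm_nonneg ψ).eq_or_lt with h0 | hs
  · exact ⟨0, by simp, by simp [← h0]⟩
  have key : ∀ n : ℕ, ∃ u : Y, ‖u‖ ≤ 1 ∧ ‖ψ‖ - 1 / ((n : ℝ) + 1) < ψ u := by
    intro n
    have hlt : ‖ψ‖ - 1 / ((n : ℝ) + 1) < ‖ψ‖ := by
      have : (0 : ℝ) < 1 / ((n : ℝ) + 1) := by positivity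
      linarith
    obtain ⟨x, hx, hx2⟩ := ψ.exists_lt_apply_of_lt_opNorm hlt
    rcases le_total 0 (ψ x) with h | h
    · exact ⟨x, hx.le, by rwa [Real.norm_of_nonneg h] at hx2⟩
    · refine ⟨-x, by simpa using hx.le, ?_⟩
      rw [Real.norm_of_nonpos h] at hx2
      simpa using hx2
  choose u hu1 hu2 using key
  have hc : CauchySeq u := by
    rw [Metric.cauchySeq_iff]
    intro ε hε
    obtain ⟨δ, hδ, H⟩ := exists_forall_closed_ball_dist_add_le_two_sub Y hε
    obtain ⟨K, hK⟩ := exists_nat_one_div_lt (show 0 < ‖ψ‖ * δ / 2 by positivity)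
    refine ⟨K, fun m hm n hn => ?_⟩
    by_contra hcon
    push Not at hcon
    rw [dist_eq_norm] at hcon
    have h1 := H (hu1 m) (hu1 n) hcon
    have h2 : ψ (u m + u n) ≤ ‖ψ‖ * (2 - δ) :=
      (le_abs_self _).trans ((ψ.le_opNorm _).trans
        (mul_le_mul_of_nonneg_left h1 hs.le))
    rw [map_add] at h2
    have h3 := hu2 m
    have h4 := hu2 n
    have h5 := Nat.one_div_le_one_div (α := ℝ) hm
    have h6 := Nat.one_div_le_one_div (α := ℝ) hn
    nlinarith
  obtain ⟨v, hv⟩ := cauchySeq_tendsto_of_complete hc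
  have hv1 : ‖v‖ ≤ 1 := le_of_tendsto hv.norm (Eventually.of_forall hu1)
  refine ⟨v, hv1, le_antisymm ?_ ?_⟩
  · refine (le_abs_self _).trans ((ψ.le_opNorm _).trans ?_)
    nlinarith
  · have t1 : Tendsto (fun n => ψ (u n)) atTop (𝓝 (ψ v)) := (ψ.continuous.tendsto v).comp hv
    have t2 : Tendsto (fun n : ℕ => ‖ψ‖ - 1 / ((n : ℝ) + 1)) atTop (𝓝 (‖ψ‖ - 0)) :=
      tendsto_const_nhds.sub tendsto_one_div_add_atTop_nhds_zero_nat
    rw [sub_zero] at t2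
    exact le_of_tendsto_of_tendsto' t2 t1 (fun n => (hu2 n).le)

theorem exists_min_aux {Y : Type*} [NormedAddCommGroup Y] [NormedSpace ℝ Y] [CompleteSpace Y]
    [UniformConvexSpace Y] (ψ : Y →L[ℝ] ℝ) (p : ℝ) (hp : 1 < p) :
    ∃ y : Y, ∀ m : Y, 1 / p * ‖y‖ ^ p - ψ y ≤ 1 / p * ‖m‖ ^ p - ψ m := by
  obtain ⟨u, hu, hψ⟩ := exists_attain ψ
  have hpq := Real.HolderConjugate.conjExponent hp
  set q := p.conjExponent
  set s := ‖ψ‖ with hs_def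
  have hs : 0 ≤ s := norm_nonneg _
  have hq1 : 0 < q - 1 := hpq.symm.sub_one_pos
  have hr : 0 ≤ s ^ (q - 1) := Real.rpow_nonneg hs _
  refine ⟨s ^ (q - 1) • u, fun m => ?_⟩
  have e1 : (s ^ (q - 1)) ^ p = s ^ q := by
    rw [← Real.rpow_mul hs]
    congr 1
    have := hpq.symm.sub_one_mul_conj
    linarith
  have e2 : s ^ (q - 1) * s = s ^ q := by
    conv_lhs => rw [← Real.rpow_add_one' hs (by linarith [hpq.symm.pos])]
    congr 1
    ring
  have e3 : ‖s ^ (q - 1) • u‖ ^ p ≤ s ^ q := by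
    rw [← e1]
    apply Real.rpow_le_rpow (norm_nonneg _) _ hpq.pos.le
    rw [norm_smul, Real.norm_of_nonneg hr]
    nlinarith
  have y := Real.young_inequality_of_nonneg (norm_nonneg m) hs hpq
  have b : ψ m ≤ ‖m‖ * s := by
    rw [mul_comm]
    exact (le_abs_self _).trans (ψ.le_opNorm _)
  rw [map_smul, smul_eq_mul, hψ, e2]
  have hsum := hpq.inv_add_inv_eq_one
  have hp0 : 0 < p⁻¹ := inv_pos.2 hpq.pos
  have e4 : 1 / p * ‖s ^ (q - 1) • u‖ ^ p ≤ p⁻¹ * s ^ q := by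
    rw [one_div]; exact mul_le_mul_of_nonneg_left e3 hp0.le
  have e5 : s ^ q = p⁻¹ * s ^ q + q⁻¹ * s ^ q := by rw [← add_mul, hsum, one_mul]
  have e6 : 1 / p * ‖m‖ ^ p = ‖m‖ ^ p / p := by ring
  have e7 : s ^ q / q = q⁻¹ * s ^ q := by ring
  rw [e7] at y
  rw [e6]
  linarith

theorem exists_proj {X : Type*} [NormedAddCommGroup X] [NormedSpace ℝ X] [CompleteSpace X]
    [UniformConvexSpace X] (p : ℝ) (hp : 1 < p) (M : Submodule ℝ X) (hM : IsClosed (M : Set X))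
    (x : X) : ∃ y, y ∈ (M : Set X) ∧ ∀ m ∈ (M : Set X), bregmanDist p y x ≤ bregmanDist p m x := by
  have : CompleteSpace M := hM.completeSpace_coe
  have := ucs_submodule M
  obtain ⟨y, hy⟩ := exists_min_aux ((dualityMap p x).comp M.subtypeL) p hp
  refine ⟨y, y.2, fun m hm => ?_⟩
  have := hy ⟨m, hm⟩
  simp only [ContinuousLinearMap.comp_apply, Submodule.subtypeL_apply, Submodule.coe_norm] at this
  simp only [bregmanDist, map_sub]
  linarith

theorem proj_spec {X : Type*} [NormedAddCommGroup X] [NormedSpace ℝ X] [CompleteSpace X]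
    [UniformConvexSpace X] (p : ℝ) (hp : 1 < p) (M : Submodule ℝ X) (hM : IsClosed (M : Set X))
    (x : X) : bregmanProj p (M : Set X) x ∈ (M : Set X) ∧
      ∀ m ∈ (M : Set X), bregmanDistSet p (M : Set X) x ≤ bregmanDist p m x :=
  Classical.epsilon_spec (exists_proj p hp M hM x)

theorem dualityMap_smul {X : Type*} [NormedAddCommGroup X] [NormedSpace ℝ X] (p t : ℝ)
    (ht : 0 < t) (x v : X) : dualityMap p (t • x) (t • v) = t ^ p * dualityMap p x v := by
  have h := fderiv_comp_smul (𝕜 := ℝ) (f := fun y : X => 1 / p * ‖y‖ ^ p) (x := x) t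
  have h2 : (fun y : X => 1 / p * ‖t • y‖ ^ p) = fun y : X => t ^ p • (1 / p * ‖y‖ ^ p) := by
    funext y
    rw [norm_smul, Real.norm_of_nonneg ht.le, Real.mul_rpow ht.le (norm_nonneg _), smul_eq_mul]
    ring
  have h3 : fderiv ℝ (fun y : X => 1 / p * ‖t • y‖ ^ p) x = t ^ p • dualityMap p x := by
    rw [h2]
    exact congrFun (fderiv_const_smul_field (𝕜 := ℝ) (f := fun y : X => 1 / p * ‖y‖ ^ p) (t ^ p)) x
  rw [h3] at h
  have h4 := congrArg (fun L : X →L[ℝ] ℝ => L v) h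
  simp only [_root_.smul_apply, smul_eq_mul] at h4
  rw [map_smul, smul_eq_mul, h4]
  rfl

theorem bregmanDist_smul {X : Type*} [NormedAddCommGroup X] [NormedSpace ℝ X] (p t : ℝ)
    (ht : 0 < t) (x y : X) : bregmanDist p (t • x) (t • y) = t ^ p * bregmanDist p x y := by
  unfold bregmanDist
  rw [← smul_sub, dualityMap_smul p t ht, norm_smul, norm_smul, Real.norm_of_nonneg ht.le,
    Real.mul_rpow ht.le (norm_nonneg _), Real.mul_rpow ht.le (norm_nonneg _)]
  ring

theorem distSet_smul_le {X : Type*} [NormedAddCommGroup X] [NormedSpace ℝ X] [CompleteSpace X]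
    [UniformConvexSpace X] (p : ℝ) (hp : 1 < p) (M : Submodule ℝ X) (hM : IsClosed (M : Set X))
    (t : ℝ) (ht : 0 < t) (x : X) :
    bregmanDistSet p (M : Set X) (t • x) ≤ t ^ p * bregmanDistSet p (M : Set X) x := by
  have h := (proj_spec p hp M hM (t • x)).2 (t • bregmanProj p (M : Set X) x)
    (M.smul_mem t (proj_spec p hp M hM x).1)
  rwa [bregmanDist_smul p t ht] at h

theorem distSet_smul {X : Type*} [NormedAddCommGroup X] [NormedSpace ℝ X] [CompleteSpace X]
    [UniformConvexSpace X] (p : ℝ) (hp : 1 < p) (M : Submodule ℝ X) (hM : IsClosed (M : Set X))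
    (t : ℝ) (ht : 0 < t) (x : X) :
    bregmanDistSet p (M : Set X) (t • x) = t ^ p * bregmanDistSet p (M : Set X) x := by
  refine le_antisymm (distSet_smul_le p hp M hM t ht x) ?_
  have h := distSet_smul_le p hp M hM t⁻¹ (inv_pos.2 ht) (t • x)
  rw [inv_smul_smul₀ ht.ne', Real.inv_rpow ht.le] at h
  have h5 : 0 < t ^ p := Real.rpow_pos_of_pos ht p
  calc _ ≤ t ^ p * ((t ^ p)⁻¹ * bregmanDistSet p (M : Set X) (t • x)) :=
        mul_le_mul_of_nonneg_left h h5.le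
    _ = _ := by rw [mul_inv_cancel_left₀ h5.ne']

/-- Norm differentiability at unit vectors in a uniformly smooth space. -/
theorem norm_diff {X : Type*} [NormedAddCommGroup X] [NormedSpace ℝ X] (hs : UnifSmooth X)
    (x : X) (hx : ‖x‖ = 1) : ∃ F : X →L[ℝ] ℝ, ‖F‖ = 1 ∧ F x = 1 ∧
      HasFDerivAt (fun y : X => ‖y‖) F x := by
  obtain ⟨F, hF, hFx⟩ := exists_dual_vector ℝ x (by rw [hx]; exact one_ne_zero)
  have hFx1 : F x = 1 := by rw [hFx, hx]; rfl
  have hle : ∀ y, F y ≤ ‖y‖ := fun y => by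
    have := (le_abs_self _).trans (F.le_opNorm y)
    rwa [hF, one_mul] at this
  refine ⟨F, hF, hFx1, ?_⟩
  rw [hasFDerivAt_iff_isLittleO_nhds_zero, Asymptotics.isLittleO_iff]
  intro c hc
  have h1 : ∀ᶠ τ in 𝓝[>] (0 : ℝ), modSmooth X τ / τ < c / 2 :=
    hs.eventually (gt_mem_nhds (by positivity))
  rw [eventually_nhdsWithin_iff, Metric.eventually_nhds_iff] at h1
  obtain ⟨r, hr, H⟩ := h1
  rw [Metric.eventually_nhds_iff]
  refine ⟨r, hr, fun h hh => ?_⟩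
  rw [dist_zero_right] at hh
  rcases eq_or_ne h 0 with rfl | hne
  · simp
  have hpos : 0 < ‖h‖ := norm_pos_iff.2 hne
  have h2 := H (y := ‖h‖) (by simpa using hh) hpos
  rw [div_lt_iff₀ hpos] at h2
  have h3 : (‖x + h‖ + ‖x - h‖) / 2 - 1 ≤ modSmooth X ‖h‖ := by
    apply le_csSup
    · refine ⟨‖h‖, ?_⟩
      rintro d ⟨a, b, ha, hb, rfl⟩
      have k1 := norm_add_le a (‖h‖ • b)
      have k2 := norm_sub_le a (‖h‖ • b)
      rw [norm_smul, norm_norm, ha, hb] at k1 k2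
      linarith
    · refine ⟨x, ‖h‖⁻¹ • h, hx, ?_, ?_⟩
      · rw [norm_smul, norm_inv, norm_norm, inv_mul_cancel₀ hpos.ne']
      · rw [smul_inv_smul₀ hpos.ne']
  have h4 := hle (x + h)
  have h5 := hle (x - h)
  rw [map_add] at h4
  rw [map_sub] at h5
  rw [Real.norm_eq_abs, abs_le, hx]
  constructor <;> nlinarith

theorem bregmanDist_nonneg {X : Type*} [NormedAddCommGroup X] [NormedSpace ℝ X]
    (hs : UnifSmooth X) (p : ℝ) (hp : 1 < p) (m x : X) : 0 ≤ bregmanDist p m x := by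
  have hp0 : 0 < p := by linarith
  have unit : ∀ m x : X, ‖x‖ = 1 → 0 ≤ bregmanDist p m x := by
    intro m x hx
    obtain ⟨F, hF, hFx, hd⟩ := norm_diff hs x hx
    have hd2 : HasFDerivAt (fun y : X => 1 / p * ‖y‖ ^ p) F x := by
      have := (hd.rpow_const (p := p) (Or.inr hp.le)).const_mul (1 / p)
      rwa [hx, Real.one_rpow, mul_one, smul_smul, one_div_mul_cancel hp0.ne', one_smul] at this
    unfold bregmanDist dualityMap
    rw [hd2.fderiv, map_sub, hFx, hx, Real.one_rpow]
    have hpq := Real.HolderConjugate.conjExponent hp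
    have y := Real.young_inequality_of_nonneg (norm_nonneg m) zero_le_one hpq
    have b := (le_abs_self _).trans (F.le_opNorm m)
    rw [hF, one_mul] at b
    rw [Real.one_rpow, mul_one] at y
    have hsum := hpq.inv_add_inv_eq_one
    have e6 : 1 / p * ‖m‖ ^ p = ‖m‖ ^ p / p := by ring
    rw [e6]
    simp only [one_div] at *
    linarith
  rcases eq_or_ne x 0 with rfl | hne
  · have hmin : IsLocalMin (fun y : X => 1 / p * ‖y‖ ^ p) 0 := by
      refine Eventually.of_forall fun y => ?_
      simp only [norm_zero, Real.zero_rpow hp0.ne', mul_zero]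
      positivity
    unfold bregmanDist dualityMap
    rw [hmin.fderiv_eq_zero]
    simp only [norm_zero, Real.zero_rpow hp0.ne', mul_zero, _root_.zero_apply,
      sub_zero]
    positivity
  · have hpos : 0 < ‖x‖ := norm_pos_iff.2 hne
    have h := bregmanDist_smul p ‖x‖ hpos (‖x‖⁻¹ • m) (‖x‖⁻¹ • x)
    rw [smul_inv_smul₀ hpos.ne', smul_inv_smul₀ hpos.ne'] at h
    rw [h]
    refine mul_nonneg (by positivity) (unit _ _ ?_)
    rw [norm_smul, norm_inv, norm_norm, inv_mul_cancel₀ hpos.ne']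

theorem statement5 {X : Type*} [NormedAddCommGroup X] [NormedSpace ℝ X] [CompleteSpace X]
    (hconv : UnifConvex X) (hsmooth : UnifSmooth X) (p : ℝ) (hp : 1 < p)
    (M N : Submodule ℝ X) (hM : IsClosed (M : Set X)) (hN : IsClosed (N : Set X)) :
    (BregmanRegular p M N ↔ LinearBregmanRegular p M N) ∧
    (LinearBregmanRegular p M N ↔ BoundedlyLinearBregmanRegular p M N) := by
  have := ucs_of_unifConvex hconv
  have hp0 : 0 < p := by linarith
  have hMN : IsClosed ((M ⊓ N : Submodule ℝ X) : Set X) := by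
    rw [Submodule.coe_inf]; exact hM.inter hN
  set d : X → ℝ := fun x => bregmanDistSet p ((M ⊓ N : Submodule ℝ X) : Set X) x with hd
  set e : X → ℝ := fun x =>
    max (bregmanDistSet p (M : Set X) x) (bregmanDistSet p (N : Set X) x) with he
  have hdt : ∀ t : ℝ, 0 < t → ∀ x, d (t • x) = t ^ p * d x := fun t ht x =>
    distSet_smul p hp _ hMN t ht x
  have het : ∀ t : ℝ, 0 < t → ∀ x, e (t • x) = t ^ p * e x := fun t ht x => by
    simp only [he]
    rw [distSet_smul p hp M hM t ht x, distSet_smul p hp N hN t ht x,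
      mul_max_of_nonneg _ _ (Real.rpow_nonneg ht.le p)]
  have he0 : ∀ x, 0 ≤ e x := fun x =>
    (bregmanDist_nonneg hsmooth p hp _ x).trans (le_max_left _ _)
  have root : ∀ a : ℝ, 0 < a → ∃ t : ℝ, 0 < t ∧ t ^ p = a := fun a ha =>
    ⟨a ^ p⁻¹, Real.rpow_pos_of_pos ha _, Real.rpow_inv_rpow ha.le hp0.ne'⟩
  refine ⟨⟨fun h => ?_, fun h => ?_⟩, ⟨fun h => ?_, fun h => ?_⟩⟩
  · obtain ⟨δ, hδ, H⟩ := h 1 one_pos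
    have H' : ∀ x, e x < δ → d x < 1 := H
    refine ⟨2 / δ, by positivity, fun x => ?_⟩
    change d x ≤ 2 / δ * e x
    rcases (he0 x).eq_or_lt with h0 | hpos
    · rw [← h0, mul_zero]
      by_contra hcon
      push Not at hcon
      obtain ⟨t, ht, hta⟩ := root (1 / d x) (by positivity)
      have := H' (t • x) (by rw [het t ht, ← h0, mul_zero]; exact hδ)
      rw [hdt t ht, hta, one_div_mul_cancel hcon.ne'] at this
      exact lt_irrefl _ this
    · obtain ⟨t, ht, hta⟩ := root (δ / 2 / e x) (by positivity)
      have := H' (t • x) (by rw [het t ht, hta, div_mul_cancel₀ _ hpos.ne']; linarith)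
      rw [hdt t ht, hta] at this
      have h6 : d x = 2 / δ * e x * (δ / 2 / e x * d x) := by field_simp
      have h7 : 0 < 2 / δ * e x := by positivity
      nlinarith
  · obtain ⟨κ, hκ, H⟩ := h
    refine fun ε hε => ⟨ε / κ, by positivity, fun x hx => (H x).trans_lt ?_⟩
    rw [lt_div_iff₀ hκ] at hx
    linarith
  · obtain ⟨κ, hκ, H⟩ := h
    exact fun S _ => ⟨κ, hκ, fun x _ => H x⟩
  · obtain ⟨κ, hκ, H⟩ := h (Metric.closedBall 0 1) Metric.isBounded_closedBall
    refine ⟨κ, hκ, fun x => ?_⟩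
    have ht : 0 < (‖x‖ + 1)⁻¹ := by positivity
    have h8 : d ((‖x‖ + 1)⁻¹ • x) ≤ κ * e ((‖x‖ + 1)⁻¹ • x) := by
      apply H
      rw [mem_closedBall_zero_iff, norm_smul, Real.norm_of_nonneg ht.le, inv_mul_le_iff₀ (by positivity)]
      linarith
    rw [hdt _ ht, het _ ht] at h8
    have h9 : 0 < (‖x‖ + 1)⁻¹ ^ p := Real.rpow_pos_of_pos ht p
    change d x ≤ κ * e x
    refine le_of_mul_le_mul_left (h8.trans_eq ?_) h9
    ring
end
end

section
/- Let X be a real Banach space that is uniformly convex and uniformly smooth, let 1 < p < ∞, and let M, N be closed linear subspaces of X such that M + N is closed. Then the pair (M,N) is boundedly Bregman regular, i.e., for every bounded set S ⊆ X and every ε>0 there is δ>0 such that for all x ∈ S, max{D_p(M,x), D_p(N,x)} < δ implies D_p(M∩N, x) < ε. -/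
open Filter Topology

noncomputable section

variable {X : Type*} [NormedAddCommGroup X] [NormedSpace ℝ X]

lemma aux_tangent {p : ℝ} (hp : 1 < p) {r s : ℝ} (hr : 0 ≤ r) (hs : 0 ≤ s) :
    1 / p * r ^ p + r ^ (p - 1) * (s - r) ≤ 1 / p * s ^ p := by
  have hp0 : 0 < p := by linarith
  rcases hr.eq_or_lt with h | h
  · subst h
    rw [Real.zero_rpow hp0.ne', Real.zero_rpow (by linarith)]
    simp only [mul_zero, zero_mul, add_zero]
    positivity
  · have hb := one_add_mul_self_le_rpow_one_add (s := s / r - 1) (by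
      have : 0 ≤ s / r := by positivity
      linarith) hp.le
    have e1 : 1 + (s / r - 1) = s / r := by ring
    rw [e1, Real.div_rpow hs hr, le_div_iff₀ (by positivity)] at hb
    have e2 : r ^ p = r ^ (p - 1) * r := by
      rw [← Real.rpow_add_one h.ne']; congr 1; ring
    have e3 : (1 + p * (s / r - 1)) * r ^ p = r ^ p + p * (r ^ (p - 1) * (s - r)) := by
      rw [e2]; field_simp
    rw [e3] at hb
    have : 1 / p * (r ^ p + p * (r ^ (p - 1) * (s - r))) ≤ 1 / p * s ^ p :=
      mul_le_mul_of_nonneg_left hb (by positivity)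
    calc _ = 1 / p * (r ^ p + p * (r ^ (p - 1) * (s - r))) := by field_simp
      _ ≤ _ := this

lemma aux_smooth_bound (τ : ℝ) (hτ : 0 ≤ τ) (u e : X) (hu : ‖u‖ = 1) (he : ‖e‖ = 1) :
    (‖u + τ • e‖ + ‖u - τ • e‖) / 2 - 1 ≤ modSmooth X τ := by
  apply le_csSup
  · refine ⟨τ, ?_⟩
    rintro d ⟨x, y, hx, hy, rfl⟩
    have h1 := norm_add_le x (τ • y)
    have h2 := norm_sub_le x (τ • y)
    rw [norm_smul, Real.norm_of_nonneg hτ, hx, hy] at h1 h2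
    linarith
  · exact ⟨u, e, hu, he, rfl⟩

lemma aux_norm_deriv (hsmooth : UnifSmooth X) (x : X) (hx : x ≠ 0) (ψ : X →L[ℝ] ℝ)
    (hψ : ‖ψ‖ ≤ 1) (hψx : ψ x = ‖x‖) : HasFDerivAt (fun y : X => ‖y‖) ψ x := by
  have hle : ∀ z, ψ z ≤ ‖z‖ := fun z => by
    have := (le_abs_self _).trans (ψ.le_opNorm z)
    nlinarith [norm_nonneg z]
  have hr : 0 < ‖x‖ := norm_pos_iff.2 hx
  rw [hasFDerivAt_iff_isLittleO_nhds_zero, Asymptotics.isLittleO_iff]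
  intro c hc
  have h1 : ∀ᶠ τ in 𝓝[>] (0 : ℝ), modSmooth X τ / τ < c / 2 :=
    hsmooth.eventually (gt_mem_nhds (by positivity))
  rw [eventually_nhdsWithin_iff, Metric.eventually_nhds_iff] at h1
  obtain ⟨η, hη, h1⟩ := h1
  rw [Metric.eventually_nhds_iff]
  refine ⟨η * ‖x‖, by positivity, fun h hh => ?_⟩
  rw [dist_zero_right] at hh
  rcases eq_or_ne h 0 with rfl | h0
  · simp
  have hn : 0 < ‖h‖ := norm_pos_iff.2 h0
  have hτ : 0 < ‖h‖ / ‖x‖ := by positivity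
  have h2 := h1 (y := ‖h‖ / ‖x‖) (by
    rw [dist_zero_right, Real.norm_of_nonneg hτ.le, div_lt_iff₀ hr]; exact hh) hτ
  rw [div_lt_iff₀ hτ] at h2
  have h3 := aux_smooth_bound (‖h‖ / ‖x‖) hτ.le (‖x‖⁻¹ • x) (‖h‖⁻¹ • h)
    (by rw [norm_smul, norm_inv, norm_norm, inv_mul_cancel₀ hr.ne'])
    (by rw [norm_smul, norm_inv, norm_norm, inv_mul_cancel₀ hn.ne'])
  have e0 : (‖h‖ / ‖x‖) • (‖h‖⁻¹ • h) = ‖x‖⁻¹ • h := by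
    rw [smul_smul]; congr 1; field_simp
  rw [e0, ← smul_add, ← smul_sub, norm_smul, norm_smul, norm_inv, norm_norm] at h3
  have h4 : (‖x‖⁻¹ * ‖x + h‖ + ‖x‖⁻¹ * ‖x - h‖) / 2 - 1 < c / 2 * (‖h‖ / ‖x‖) := h3.trans_lt h2
  have h5 : ‖x + h‖ + ‖x - h‖ - 2 * ‖x‖ < c * ‖h‖ := by
    have := mul_lt_mul_of_pos_left h4 (by positivity : 0 < 2 * ‖x‖)
    have ea : 2 * ‖x‖ * ((‖x‖⁻¹ * ‖x + h‖ + ‖x‖⁻¹ * ‖x - h‖) / 2 - 1)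
      = ‖x + h‖ + ‖x - h‖ - 2 * ‖x‖ := by field_simp
    have eb : 2 * ‖x‖ * (c / 2 * (‖h‖ / ‖x‖)) = c * ‖h‖ := by field_simp
    rwa [ea, eb] at this
  have h6 := hle (x + h)
  have h7 := hle (x - h)
  rw [map_add, hψx] at h6
  rw [map_sub, hψx] at h7
  rw [Real.norm_of_nonneg (by linarith)]
  linarith

lemma aux_duality (hsmooth : UnifSmooth X) {p : ℝ} (hp : 1 < p) (x : X) :
    ‖dualityMap p x‖ ≤ ‖x‖ ^ (p - 1) ∧
    ∀ y, 1 / p * ‖x‖ ^ p + dualityMap p x (y - x) ≤ 1 / p * ‖y‖ ^ p := by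
  have hp0 : 0 < p := by linarith
  obtain ⟨ψ, hψ, hψx⟩ := exists_dual_vector'' ℝ x
  have hψx : ψ x = ‖x‖ := by simpa using hψx
  have hle : ∀ z, ψ z ≤ ‖z‖ := fun z => by
    have := (le_abs_self _).trans (ψ.le_opNorm z)
    nlinarith [norm_nonneg z]
  have hD : HasFDerivAt (fun y : X => 1 / p * ‖y‖ ^ p) (‖x‖ ^ (p - 1) • ψ) x := by
    rcases eq_or_ne x 0 with rfl | hx
    · rw [norm_zero, Real.zero_rpow (by linarith), zero_smul,
        hasFDerivAt_iff_isLittleO_nhds_zero, Asymptotics.isLittleO_iff]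
      intro c hc
      have hlim : Tendsto (fun h : X => 1 / p * ‖h‖ ^ (p - 1)) (𝓝 0) (𝓝 0) := by
        have : Continuous (fun h : X => 1 / p * ‖h‖ ^ (p - 1)) :=
          continuous_const.mul (continuous_norm.rpow_const fun _ => Or.inr (by linarith))
        have h := this.tendsto 0
        simpa [Real.zero_rpow (show p - 1 ≠ 0 by linarith)] using h
      filter_upwards [hlim.eventually (gt_mem_nhds hc)] with h hh
      simp only [zero_add, norm_zero, Real.zero_rpow hp0.ne', mul_zero, sub_zero,
        zero_apply]
      rw [Real.norm_of_nonneg (by positivity)]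
      have e2 : ‖h‖ ^ p = ‖h‖ ^ (p - 1) * ‖h‖ := by
        rcases eq_or_ne h 0 with rfl | h0
        · simp [Real.zero_rpow hp0.ne']
        · rw [← Real.rpow_add_one (norm_ne_zero_iff.2 h0)]; congr 1; ring
      rw [e2, ← mul_assoc]
      exact mul_le_mul_of_nonneg_right hh.le (norm_nonneg _)
    · have h1 := aux_norm_deriv hsmooth x hx ψ hψ hψx
      have h2 := (h1.rpow_const (p := p) (Or.inr hp.le)).const_mul (1 / p)
      have e : (1 / p) • (p * ‖x‖ ^ (p - 1)) • ψ = ‖x‖ ^ (p - 1) • ψ := by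
        rw [smul_smul]; congr 1; field_simp
      rw [← e]; exact h2
  have hj : dualityMap p x = ‖x‖ ^ (p - 1) • ψ := hD.fderiv
  have hnn : 0 ≤ ‖x‖ ^ (p - 1) := by positivity
  rw [hj]
  constructor
  · rw [norm_smul, Real.norm_of_nonneg hnn]
    nlinarith
  · intro y
    have h1 := aux_tangent hp (norm_nonneg x) (norm_nonneg y)
    have h2 : ‖x‖ ^ (p - 1) * (ψ (y - x)) ≤ ‖x‖ ^ (p - 1) * (‖y‖ - ‖x‖) := by
      apply mul_le_mul_of_nonneg_left _ hnn
      rw [map_sub, hψx]; linarith [hle y]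
    simp only [smul_apply, smul_eq_mul]
    linarith

lemma aux_real_gap {p : ℝ} (hp : 1 < p) (R η : ℝ) (hη : 0 < η) :
    ∃ δ > 0, ∀ a b : ℝ, 0 ≤ b → b + η ≤ a → a ≤ R →
      ((a + b) / 2) ^ p + δ ≤ (a ^ p + b ^ p) / 2 := by
  let K : Set (ℝ × ℝ) := (Set.Icc 0 R ×ˢ Set.Icc 0 R) ∩ {q | q.2 + η ≤ q.1}
  have hK : IsCompact K := (isCompact_Icc.prod isCompact_Icc).inter_right
    (isClosed_le (by fun_prop) (by fun_prop))
  have hc : ContinuousOn (fun q : ℝ × ℝ => (q.1 ^ p + q.2 ^ p) / 2 - ((q.1 + q.2) / 2) ^ p) K := by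
    have hp0 : 0 ≤ p := by linarith
    apply Continuous.continuousOn
    exact (((continuous_fst.rpow_const fun _ => Or.inr hp0).add
      (continuous_snd.rpow_const fun _ => Or.inr hp0)).div_const 2).sub
      (((continuous_fst.add continuous_snd).div_const 2).rpow_const fun _ => Or.inr hp0)
  obtain ⟨δ, hδ, h⟩ := hK.exists_forall_le' hc (a := 0) (by
    rintro ⟨a, b⟩ ⟨⟨ha, hb⟩, hab⟩
    simp only [Set.mem_ofPred_eq] at hab
    have := (strictConvexOn_rpow hp).2 (Set.mem_Ici.2 ha.1) (Set.mem_Ici.2 hb.1)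
      (show a ≠ b by rintro rfl; linarith) (by norm_num : (0:ℝ) < 1 / 2) (by norm_num : (0:ℝ) < 1 / 2) (by norm_num)
    simp only [smul_eq_mul] at this
    have e : (a + b) / 2 = 1 / 2 * a + 1 / 2 * b := by ring
    simp only [e]
    linarith)
  refine ⟨δ, hδ, fun a b hb hab haR => ?_⟩
  have := h (a, b) ⟨⟨⟨by linarith, haR⟩, ⟨hb, by linarith⟩⟩, hab⟩
  simp only at this
  linarith

lemma aux_modConvex {ε : ℝ} (u v : X) (hu : ‖u‖ = 1) (hv : ‖v‖ = 1)
    (h : ε ≤ ‖u - v‖) : ‖u + v‖ / 2 ≤ 1 - modConvex X ε := by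
  have : modConvex X ε ≤ 1 - ‖u + v‖ / 2 := by
    apply csInf_le
    · refine ⟨0, ?_⟩
      rintro d ⟨x, y, hx, hy, -, rfl⟩
      have := norm_add_le x y
      linarith
    · exact ⟨u, v, hu, hv, h, rfl⟩
  linarith

lemma aux_mid (hconv : UnifConvex X) {p : ℝ} (hp : 1 < p) (R ε : ℝ) (hR : 0 < R) (hε : 0 < ε) :
    ∃ δ > 0, ∀ x y : X, ‖x‖ ≤ R → ‖y‖ ≤ R → ε ≤ ‖x - y‖ →
      1 / p * ‖(1 / 2 : ℝ) • (x + y)‖ ^ p + δ ≤ (1 / p * ‖x‖ ^ p + 1 / p * ‖y‖ ^ p) / 2 := by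
  have hp0 : 0 < p := by linarith
  set d := modConvex X (min (ε / (2 * R)) 2) with hd
  have hd0 : 0 < d := hconv _ (by positivity) (min_le_right _ _)
  obtain ⟨δ, hδ, hgap⟩ := aux_real_gap hp R (ε / 4) (by positivity)
  refine ⟨1 / p * min δ ((ε * d / 4) ^ p), by positivity, ?_⟩
  have key : ∀ x y : X, ‖x‖ ≤ R → ‖y‖ ≤ ‖x‖ → ε ≤ ‖x - y‖ →
      1 / p * ‖(1 / 2 : ℝ) • (x + y)‖ ^ p + 1 / p * min δ ((ε * d / 4) ^ p)
        ≤ (1 / p * ‖x‖ ^ p + 1 / p * ‖y‖ ^ p) / 2 := by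
    intro x y hx hyx hxy
    have hs : ‖(1 / 2 : ℝ) • (x + y)‖ = ‖x + y‖ / 2 := by
      rw [norm_smul]; norm_num; ring
    have hs2 := norm_add_le x y
    suffices h : (‖x + y‖ / 2) ^ p + min δ ((ε * d / 4) ^ p) ≤ (‖x‖ ^ p + ‖y‖ ^ p) / 2 by
      rw [hs]
      have := mul_le_mul_of_nonneg_left h (by positivity : 0 ≤ 1 / p)
      linarith
    by_cases hc : ‖y‖ + ε / 4 ≤ ‖x‖
    · have h1 := hgap _ _ (norm_nonneg y) hc hx
      have h2 : (‖x + y‖ / 2) ^ p ≤ ((‖x‖ + ‖y‖) / 2) ^ p :=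
        Real.rpow_le_rpow (by positivity) (by linarith) hp0.le
      linarith [min_le_left δ ((ε * d / 4) ^ p)]
    · push Not at hc
      have ht := norm_sub_le x y
      have hy0 : ε / 4 ≤ ‖y‖ := by linarith
      have hyp : 0 < ‖y‖ := by linarith
      have hxp : 0 < ‖x‖ := by linarith
      set u := ‖x‖⁻¹ • x with hu
      set v := ‖y‖⁻¹ • y with hv
      have hun : ‖u‖ = 1 := by rw [hu, norm_smul, norm_inv, norm_norm, inv_mul_cancel₀ hxp.ne']
      have hvn : ‖v‖ = 1 := by rw [hv, norm_smul, norm_inv, norm_norm, inv_mul_cancel₀ hyp.ne']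
      have hxu : x = ‖x‖ • u := by rw [hu, smul_smul, mul_inv_cancel₀ hxp.ne', one_smul]
      have hyv : y = ‖y‖ • v := by rw [hv, smul_smul, mul_inv_cancel₀ hyp.ne', one_smul]
      have huv : ε / (2 * R) ≤ ‖u - v‖ := by
        have e : x - y = ‖x‖ • (u - v) + (‖x‖ - ‖y‖) • v := by
          rw [smul_sub, sub_smul, ← hxu, ← hyv]; abel
        have h1 := norm_add_le (‖x‖ • (u - v)) ((‖x‖ - ‖y‖) • v)
        rw [← e, norm_smul, norm_smul, norm_norm, hvn,
          Real.norm_of_nonneg (by linarith : 0 ≤ ‖x‖ - ‖y‖)] at h1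
        rw [div_le_iff₀ (by positivity)]
        have : ‖x‖ * ‖u - v‖ ≤ R * ‖u - v‖ := mul_le_mul_of_nonneg_right hx (norm_nonneg _)
        linarith
      have hm := aux_modConvex (ε := min (ε / (2 * R)) 2) u v hun hvn ((min_le_left _ _).trans huv)
      rw [← hd] at hm
      have hsum : ‖x + y‖ / 2 ≤ (‖x‖ + ‖y‖) / 2 - ε * d / 4 := by
        have e : x + y = ‖y‖ • (u + v) + (‖x‖ - ‖y‖) • u := by
          rw [smul_add, sub_smul, ← hxu, ← hyv]; abel
        have h1 := norm_add_le (‖y‖ • (u + v)) ((‖x‖ - ‖y‖) • u)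
        rw [← e, norm_smul, norm_smul, norm_norm, hun,
          Real.norm_of_nonneg (by linarith : 0 ≤ ‖x‖ - ‖y‖)] at h1
        have h2 : ‖y‖ * (‖u + v‖ / 2) ≤ ‖y‖ * (1 - d) := mul_le_mul_of_nonneg_left hm hyp.le
        have h3 : ε / 4 * d ≤ ‖y‖ * d := mul_le_mul_of_nonneg_right hy0 hd0.le
        linarith
      have h1 := Real.add_rpow_le_rpow_add (a := ‖x + y‖ / 2) (b := ε * d / 4) (by positivity)
        (by positivity) hp.le
      have h2 : (‖x + y‖ / 2 + ε * d / 4) ^ p ≤ ((‖x‖ + ‖y‖) / 2) ^ p :=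
        Real.rpow_le_rpow (by positivity) (by linarith) hp0.le
      have h3 := (convexOn_rpow hp.le).2 (Set.mem_Ici.2 hxp.le) (Set.mem_Ici.2 hyp.le)
        (by norm_num : (0:ℝ) ≤ 1 / 2) (by norm_num : (0:ℝ) ≤ 1 / 2) (by norm_num)
      simp only [smul_eq_mul] at h3
      have e : (‖x‖ + ‖y‖) / 2 = 1 / 2 * ‖x‖ + 1 / 2 * ‖y‖ := by ring
      rw [← e] at h3
      linarith [min_le_right δ ((ε * d / 4) ^ p)]
  intro x y hx hy hxy
  rcases le_total ‖y‖ ‖x‖ with h | h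
  · exact key x y hx h hxy
  · have := key y x hy h (by rwa [norm_sub_rev])
    rw [add_comm y x] at this
    linarith

lemma aux_convex {p : ℝ} (hp : 1 < p) (x y : X) (t : ℝ) (ht0 : 0 ≤ t) (ht1 : t ≤ 1) :
    1 / p * ‖x + t • (y - x)‖ ^ p ≤ (1 - t) * (1 / p * ‖x‖ ^ p) + t * (1 / p * ‖y‖ ^ p) := by
  have hp0 : 0 < p := by linarith
  have h1 : ‖x + t • (y - x)‖ ≤ (1 - t) * ‖x‖ + t * ‖y‖ := by
    have e : x + t • (y - x) = (1 - t) • x + t • y := by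
      rw [smul_sub, sub_smul, one_smul]; abel
    rw [e]
    refine (norm_add_le _ _).trans ?_
    rw [norm_smul, norm_smul, Real.norm_of_nonneg ht0, Real.norm_of_nonneg (by linarith)]
  have h2 := Real.rpow_le_rpow (norm_nonneg _) h1 hp0.le
  have h3 := (convexOn_rpow hp.le).2 (Set.mem_Ici.2 (norm_nonneg x)) (Set.mem_Ici.2 (norm_nonneg y))
        (by linarith : 0 ≤ 1 - t) ht0 (by ring)
  simp only [smul_eq_mul] at h3
  have := mul_le_mul_of_nonneg_left (h2.trans h3) (by positivity : 0 ≤ 1 / p)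
  linarith

lemma aux_breg_lower (hconv : UnifConvex X) (hsmooth : UnifSmooth X) {p : ℝ} (hp : 1 < p)
    (R ε : ℝ) (hR : 0 < R) (hε : 0 < ε) :
    ∃ δ > 0, ∀ x y : X, ‖x‖ ≤ R → ε ≤ ‖y - x‖ → δ * ‖y - x‖ ≤ bregmanDist p y x := by
  obtain ⟨δ, hδ, hmid⟩ := aux_mid hconv hp (R + ε) ε (by positivity) hε
  refine ⟨2 * δ / ε, by positivity, fun x y hx hxy => ?_⟩
  have hn : 0 < ‖y - x‖ := hε.trans_le hxy
  set t := ε / ‖y - x‖ with ht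
  have ht0 : 0 < t := by positivity
  have ht1 : t ≤ 1 := by rw [ht, div_le_one hn]; exact hxy
  set z := x + t • (y - x) with hz
  have hzx : z - x = t • (y - x) := by rw [hz]; abel
  have hzn : ‖z - x‖ = ε := by
    rw [hzx, norm_smul, Real.norm_of_nonneg ht0.le, ht]; field_simp
  have hzR : ‖z‖ ≤ R + ε := by
    have := norm_add_le x (z - x)
    rw [add_sub_cancel, hzn] at this
    linarith
  have h1 := hmid z x hzR (by linarith) hzn.ge
  have h2 := (aux_duality hsmooth hp x).2 ((1 / 2 : ℝ) • (z + x))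
  have e : (1 / 2 : ℝ) • (z + x) - x = (1 / 2 : ℝ) • (z - x) := by
    module
  rw [e, hzx, map_smul, map_smul, smul_eq_mul, smul_eq_mul] at h2
  have h3 := aux_convex hp x y t ht0.le ht1
  rw [← hz] at h3
  have h4 : 2 * δ ≤ t * bregmanDist p y x := by
    unfold bregmanDist
    linarith
  have e2 : 2 * δ / ε * ‖y - x‖ = 2 * δ / t := by rw [ht]; field_simp
  rw [e2, div_le_iff₀ ht0]
  linarith

lemma aux_exists_min [CompleteSpace X] (hconv : UnifConvex X) (hsmooth : UnifSmooth X) {p : ℝ}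
    (hp : 1 < p) (M : Submodule ℝ X) (hM : IsClosed (M : Set X)) (x : X) :
    ∃ y, y ∈ (M : Set X) ∧ ∀ m ∈ (M : Set X), bregmanDist p y x ≤ bregmanDist p m x := by
  have hp0 : 0 < p := by linarith
  have hnn : ∀ y, 0 ≤ bregmanDist p y x := fun y => by
    have := (aux_duality hsmooth hp x).2 y
    unfold bregmanDist; linarith
  have hcont : Continuous fun y => bregmanDist p y x := by
    unfold bregmanDist
    exact ((continuous_const.mul (continuous_norm.rpow_const fun _ => Or.inr hp0.le)).sub
      continuous_const).sub ((dualityMap p x).continuous.comp (continuous_id.sub continuous_const))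
  set A : Set ℝ := (fun y => bregmanDist p y x) '' (M : Set X) with hA
  have hAne : A.Nonempty := ⟨_, 0, M.zero_mem, rfl⟩
  have hAb : BddBelow A := ⟨0, by rintro _ ⟨y, -, rfl⟩; exact hnn y⟩
  set I := sInf A with hI
  have hIle : ∀ m ∈ (M : Set X), I ≤ bregmanDist p m x := fun m hm => csInf_le hAb ⟨m, hm, rfl⟩
  obtain ⟨a, -, hat, haA⟩ := exists_seq_tendsto_sInf hAne hAb
  choose m hmM hma using haA
  have hmt : Tendsto (fun n => bregmanDist p (m n) x) atTop (𝓝 I) := by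
    simpa only [hma] using hat
  obtain ⟨δ₁, hδ₁, hlow⟩ := aux_breg_lower hconv hsmooth hp (‖x‖ + 1) 1 (by positivity) one_pos
  set B := 1 + (I + 1) / δ₁ + ‖x‖ with hB
  have hI0 : 0 ≤ I := le_csInf hAne (by rintro _ ⟨y, -, rfl⟩; exact hnn y)
  have hbd : ∀ᶠ n in atTop, ‖m n‖ ≤ B := by
    filter_upwards [hmt.eventually (gt_mem_nhds (lt_add_one I))] with n hn
    have h1 : ‖m n - x‖ ≤ 1 + (I + 1) / δ₁ := by
      by_cases h : 1 ≤ ‖m n - x‖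
      · have h2 := hlow x (m n) (by linarith) h
        have : ‖m n - x‖ ≤ (I + 1) / δ₁ := by
          rw [le_div_iff₀ hδ₁]; linarith
        linarith
      · have : 0 ≤ (I + 1) / δ₁ := by positivity
        linarith
    have := norm_add_le (m n - x) x
    rw [sub_add_cancel] at this
    linarith
  have hB0 : 0 < B := by positivity
  have hcau : CauchySeq m := by
    rw [Metric.cauchySeq_iff]
    intro ε hε
    obtain ⟨δ, hδ, hmid⟩ := aux_mid hconv hp B ε hB0 hε
    have hev := hbd.and (hmt.eventually (gt_mem_nhds (lt_add_of_pos_right I hδ)))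
    obtain ⟨n₀, hn₀⟩ := eventually_atTop.1 hev
    refine ⟨n₀, fun k hk l hl => ?_⟩
    by_contra hcon
    rw [dist_eq_norm, not_lt] at hcon
    have h1 := hmid (m k) (m l) (hn₀ k hk).1 (hn₀ l hl).1 hcon
    have h2 := hIle ((1 / 2 : ℝ) • (m k + m l)) (M.smul_mem _ (M.add_mem (hmM k) (hmM l)))
    have h3 := (hn₀ k hk).2
    have h4 := (hn₀ l hl).2
    have e : (1 / 2 : ℝ) • (m k + m l) - x = (1 / 2 : ℝ) • (m k - x) + (1 / 2 : ℝ) • (m l - x) := by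
      module
    unfold bregmanDist at h2 h3 h4
    rw [e, map_add, map_smul, map_smul, smul_eq_mul, smul_eq_mul] at h2
    linarith
  obtain ⟨y, hy⟩ := cauchySeq_tendsto_of_complete hcau
  refine ⟨y, hM.mem_of_tendsto hy (Eventually.of_forall hmM), fun k hk => ?_⟩
  have : bregmanDist p y x = I := tendsto_nhds_unique ((hcont.tendsto y).comp hy) hmt
  rw [this]; exact hIle k hk

lemma aux_proj [CompleteSpace X] (hconv : UnifConvex X) (hsmooth : UnifSmooth X) {p : ℝ}
    (hp : 1 < p) (M : Submodule ℝ X) (hM : IsClosed (M : Set X)) (x : X) :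
    bregmanProj p (M : Set X) x ∈ M ∧
      ∀ m ∈ M, bregmanDistSet p (M : Set X) x ≤ bregmanDist p m x := by
  have := Classical.epsilon_spec (aux_exists_min hconv hsmooth hp M hM x)
  exact this

lemma aux_regular [CompleteSpace X] (M N : Submodule ℝ X) (hM : IsClosed (M : Set X))
    (hN : IsClosed (N : Set X)) (hMN : IsClosed ((M ⊔ N : Submodule ℝ X) : Set X)) :
    ∃ C > 0, ∀ m ∈ M, ∀ n ∈ N, ∃ z ∈ M ⊓ N, ‖m - z‖ ≤ C * ‖m - n‖ := by
  have : CompleteSpace M := hM.completeSpace_coe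
  have : CompleteSpace N := hN.completeSpace_coe
  have : CompleteSpace (M ⊔ N : Submodule ℝ X) := hMN.completeSpace_coe
  let T : (M × N) →L[ℝ] (M ⊔ N : Submodule ℝ X) :=
    (M.subtypeL.comp (ContinuousLinearMap.fst ℝ M N)
      - N.subtypeL.comp (ContinuousLinearMap.snd ℝ M N)).codRestrict (M ⊔ N) (fun q =>
        Submodule.sub_mem _ (Submodule.mem_sup_left q.1.2) (Submodule.mem_sup_right q.2.2))
  have hT : ∀ q : M × N, ((T q : (M ⊔ N : Submodule ℝ X)) : X) = (q.1 : X) - (q.2 : X) :=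
    fun q => rfl
  have hsurj : Function.Surjective T := by
    rintro ⟨w, hw⟩
    obtain ⟨a, ha, b, hb, rfl⟩ := Submodule.mem_sup.1 hw
    refine ⟨(⟨a, ha⟩, ⟨-b, N.neg_mem hb⟩), Subtype.ext ?_⟩
    rw [hT]; simp
  obtain ⟨C, hC, h⟩ := T.exists_preimage_norm_le hsurj
  refine ⟨C, hC, fun m hm n hn => ?_⟩
  obtain ⟨q, hq, hqn⟩ := h ⟨m - n, Submodule.sub_mem _ (Submodule.mem_sup_left hm)
    (Submodule.mem_sup_right hn)⟩
  have hq' : (q.1 : X) - (q.2 : X) = m - n := by rw [← hT, hq]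
  refine ⟨m - q.1, ⟨M.sub_mem hm q.1.2, ?_⟩, ?_⟩
  · have : m - (q.1 : X) = n - q.2 := by
      rw [sub_eq_sub_iff_add_eq_add] at hq' ⊢
      rw [add_comm n, hq']
    show m - (q.1 : X) ∈ N
    rw [this]; exact N.sub_mem hn q.2.2
  · rw [sub_sub_cancel]
    exact (norm_fst_le q).trans hqn

theorem statement7 {X : Type*} [NormedAddCommGroup X] [NormedSpace ℝ X] [CompleteSpace X]
    (hconv : UnifConvex X) (hsmooth : UnifSmooth X) (p : ℝ) (hp : 1 < p)
    (M N : Submodule ℝ X) (hM : IsClosed (M : Set X)) (hN : IsClosed (N : Set X))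
    (hMN : IsClosed ((M ⊔ N : Submodule ℝ X) : Set X)) :
    ∀ S : Set X, Bornology.IsBounded S → ∀ ε > (0 : ℝ), ∃ δ > (0 : ℝ), ∀ x ∈ S,
      max (bregmanDistSet p (M : Set X) x) (bregmanDistSet p (N : Set X) x) < δ →
        bregmanDistSet p ((M ⊓ N : Submodule ℝ X) : Set X) x < ε := by
  intro S hS ε hε
  obtain ⟨R, hR0, hR⟩ := hS.exists_pos_norm_le
  obtain ⟨C, hC, hreg⟩ := aux_regular M N hM hN hMN
  set L : ℝ := 2 * (R + 1) ^ (p - 1) with hL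
  have hL0 : 0 < L := by positivity
  -- target closeness of the point in the intersection
  set κ := min 1 (ε / (2 * L)) with hκ
  have hκ0 : 0 < κ := by positivity
  set η := κ / (1 + 2 * C) with hη
  have hη0 : 0 < η := by positivity
  obtain ⟨δ, hδ, hlow⟩ := aux_breg_lower hconv hsmooth hp R η hR0 hη0
  refine ⟨δ * η, by positivity, fun x hx hmax => ?_⟩
  have hxR := hR x hx
  obtain ⟨h1, h2⟩ := max_lt_iff.1 hmax
  have hclose : ∀ y, bregmanDist p y x < δ * η → ‖y - x‖ < η := by
    intro y hy
    by_contra hcon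
    rw [not_lt] at hcon
    have := hlow x y hxR hcon
    have := mul_le_mul_of_nonneg_left hcon hδ.le
    linarith
  have hm := hclose _ h1
  have hn := hclose _ h2
  set m := bregmanProj p (M : Set X) x
  set n := bregmanProj p (N : Set X) x
  obtain ⟨z, hz, hmz⟩ := hreg m (aux_proj hconv hsmooth hp M hM x).1
    n (aux_proj hconv hsmooth hp N hN x).1
  have hmn : ‖m - n‖ ≤ 2 * η := by
    have := norm_sub_le (m - x) (n - x)
    rw [sub_sub_sub_cancel_right] at this
    linarith
  have hzx : ‖z - x‖ ≤ κ := by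
    have h3 := norm_sub_le (m - x) (m - z)
    rw [sub_sub_sub_cancel_left] at h3
    have h4 : C * ‖m - n‖ ≤ C * (2 * η) := mul_le_mul_of_nonneg_left hmn hC.le
    have h5 : η * (1 + 2 * C) = κ := by rw [hη]; field_simp
    linarith
  have hMNc : IsClosed ((M ⊓ N : Submodule ℝ X) : Set X) := by
    rw [Submodule.coe_inf]; exact hM.inter hN
  refine ((aux_proj hconv hsmooth hp (M ⊓ N) hMNc x).2 z hz).trans_lt ?_
  have hzR : ‖z‖ ≤ R + 1 := by
    have := norm_add_le (z - x) x
    rw [sub_add_cancel] at this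
    linarith [min_le_left 1 (ε / (2 * L))]
  have hjz : ‖dualityMap p z‖ ≤ (R + 1) ^ (p - 1) := (aux_duality hsmooth hp z).1.trans
    (Real.rpow_le_rpow (norm_nonneg _) hzR (by linarith))
  have hjx : ‖dualityMap p x‖ ≤ (R + 1) ^ (p - 1) := (aux_duality hsmooth hp x).1.trans
    (Real.rpow_le_rpow (norm_nonneg _) (by linarith) (by linarith))
  have h6 := (aux_duality hsmooth hp z).2 x
  have h7 := (neg_le_abs _).trans ((dualityMap p z).le_of_opNorm_le hjz (x - z))
  have h8 := (neg_le_abs _).trans ((dualityMap p x).le_of_opNorm_le hjx (z - x))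
  rw [norm_sub_rev] at h7
  have h9 : bregmanDist p z x ≤ L * ‖z - x‖ := by
    unfold bregmanDist
    rw [hL]
    linarith
  have h10 : L * ‖z - x‖ ≤ L * (ε / (2 * L)) :=
    mul_le_mul_of_nonneg_left (hzx.trans (min_le_right _ _)) hL0.le
  have h11 : L * (ε / (2 * L)) = ε / 2 := by field_simp
  linarith
end
end

section
/- Let X be a real Banach space that is 2-convex and 2-smooth, take p = 2, and let M, N be closed linear subspaces of X such that M + N is closed. Then the pair (M,N) is linear Bregman regular: there is a constant κ > 0 such that D_2(Π²_{M∩N} x, x) ≤ κ · max{D_2(Π²_M x, x), D_2(Π²_N x, x)} for all x ∈ X. -/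
open Filter Topology

noncomputable section

variable {X : Type*} [NormedAddCommGroup X] [NormedSpace ℝ X]

/-- Homogeneous consequence of 2-convexity. -/
theorem aux_convex_s8 {X : Type*} [NormedAddCommGroup X] [NormedSpace ℝ X]
    (hconv : PowerConvex X 2) :
    ∃ c > (0 : ℝ), ∀ x y : X,
      ‖x + y‖ ^ 2 / 4 ≤ (‖x‖ ^ 2 + ‖y‖ ^ 2) / 2 - c * ‖x - y‖ ^ 2 := by
  obtain ⟨c, hc, H⟩ := hconv
  have hunit : ∀ u v : X, ‖u‖ = 1 → ‖v‖ = 1 → ‖u + v‖ ≤ 2 - 2 * c * ‖u - v‖ ^ 2 := by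
    intro u v hu hv
    have h2 : ‖u - v‖ ≤ 2 := by
      have := norm_sub_le u v
      linarith
    have h1 := H ‖u - v‖ ⟨norm_nonneg _, h2⟩
    have h3 : modConvex X ‖u - v‖ ≤ 1 - ‖u + v‖ / 2 := by
      apply csInf_le
      · refine ⟨0, ?_⟩
        rintro d ⟨x, y, hx, hy, -, rfl⟩
        have := norm_add_le x y
        linarith
      · exact ⟨u, v, hu, hv, le_rfl, rfl⟩
    rw [Real.rpow_two] at h1
    linarith
  refine ⟨min (1 / 8) (c / 2), by positivity, ?_⟩
  set c' := min (1 / 8) (c / 2) with hc'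
  have hc1 : c' ≤ 1 / 8 := min_le_left _ _
  have hc2 : c' ≤ c / 2 := min_le_right _ _
  have hc0 : 0 < c' := by positivity
  have key : ∀ x y : X, ‖y‖ ≤ ‖x‖ →
      ‖x + y‖ ^ 2 / 4 ≤ (‖x‖ ^ 2 + ‖y‖ ^ 2) / 2 - c' * ‖x - y‖ ^ 2 := by
    intro x y hxy
    rcases eq_or_ne y 0 with rfl | hy
    · simp only [add_zero, sub_zero, norm_zero]
      nlinarith [sq_nonneg ‖x‖]
    have hs : 0 < ‖y‖ := norm_pos_iff.mpr hy
    have hr : 0 < ‖x‖ := hs.trans_le hxy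
    obtain ⟨u, hu, hxu⟩ : ∃ u : X, ‖u‖ = 1 ∧ x = ‖x‖ • u :=
      ⟨‖x‖⁻¹ • x, by rw [norm_smul, norm_inv, norm_norm, inv_mul_cancel₀ hr.ne'],
        by rw [smul_smul, mul_inv_cancel₀ hr.ne', one_smul]⟩
    obtain ⟨v, hv, hyv⟩ : ∃ u : X, ‖u‖ = 1 ∧ y = ‖y‖ • u :=
      ⟨‖y‖⁻¹ • y, by rw [norm_smul, norm_inv, norm_norm, inv_mul_cancel₀ hs.ne'],
        by rw [smul_smul, mul_inv_cancel₀ hs.ne', one_smul]⟩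
    have huv := hunit u v hu hv
    generalize ‖x‖ = r at *
    generalize ‖y‖ = s at *
    subst hxu hyv
    have e1 : r • u + s • v = s • (u + v) + (r - s) • u := by module
    have e2 : r • u - s • v = s • (u - v) + (r - s) • u := by module
    have b1 : ‖r • u + s • v‖ ≤ s * ‖u + v‖ + (r - s) := by
      rw [e1]
      refine (norm_add_le _ _).trans ?_
      rw [norm_smul, norm_smul, hu, Real.norm_of_nonneg hs.le,
        Real.norm_of_nonneg (sub_nonneg.mpr hxy), mul_one]
    have b2 : ‖r • u - s • v‖ ≤ s * ‖u - v‖ + (r - s) := by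
      rw [e2]
      refine (norm_add_le _ _).trans ?_
      rw [norm_smul, norm_smul, hu, Real.norm_of_nonneg hs.le,
        Real.norm_of_nonneg (sub_nonneg.mpr hxy), mul_one]
    have a0 := norm_nonneg (r • u + s • v)
    have b0 := norm_nonneg (r • u - s • v)
    have d0 := norm_nonneg (u - v)
    have p0 := norm_nonneg (u + v)
    generalize ‖r • u + s • v‖ = A at *
    generalize ‖r • u - s • v‖ = B at *
    generalize ‖u - v‖ = d at *
    generalize ‖u + v‖ = q at *
    have hA : A ≤ r + s - 2 * s * c * d ^ 2 := by nlinarith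
    have ht : 2 * s * c * d ^ 2 ≤ 2 * s := by nlinarith
    have ht0 : 0 ≤ 2 * s * c * d ^ 2 := by positivity
    have hA2 : A ^ 2 ≤ (r + s - 2 * s * c * d ^ 2) ^ 2 := pow_le_pow_left₀ a0 hA 2
    have hA3 : A ^ 2 ≤ (r + s) ^ 2 - (2 * s * c * d ^ 2) * (2 * s) := by
      generalize 2 * s * c * d ^ 2 = t at *
      nlinarith
    have hB : B ^ 2 ≤ 2 * (s * d) ^ 2 + 2 * (r - s) ^ 2 := by
      have := pow_le_pow_left₀ b0 b2 2
      nlinarith [sq_nonneg (s * d - (r - s))]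
    have h5 : c' * B ^ 2 ≤ c * (s * d) ^ 2 + (r - s) ^ 2 / 4 := by
      have i1 : c' * B ^ 2 ≤ c' * (2 * (s * d) ^ 2 + 2 * (r - s) ^ 2) :=
        mul_le_mul_of_nonneg_left hB hc0.le
      have i2 : c' * (s * d) ^ 2 ≤ c / 2 * (s * d) ^ 2 :=
        mul_le_mul_of_nonneg_right hc2 (sq_nonneg _)
      have i3 : c' * (r - s) ^ 2 ≤ 1 / 8 * (r - s) ^ 2 :=
        mul_le_mul_of_nonneg_right hc1 (sq_nonneg _)
      linarith
    nlinarith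
  intro x y
  rcases le_total ‖y‖ ‖x‖ with h | h
  · exact key x y h
  · have := key y x h
    rw [add_comm y x, norm_sub_rev y x] at this
    linarith

/-- Homogeneous consequence of 2-smoothness. -/
theorem aux_smooth {X : Type*} [NormedAddCommGroup X] [NormedSpace ℝ X]
    (hsmooth : PowerSmooth X 2) :
    ∃ C > (0 : ℝ), ∀ x h : X,
      ‖x + h‖ ^ 2 + ‖x - h‖ ^ 2 ≤ 2 * ‖x‖ ^ 2 + C * ‖h‖ ^ 2 := by
  obtain ⟨-, C, hC, H⟩ := hsmooth
  have hunit : ∀ u v : X, ∀ τ : ℝ, ‖u‖ = 1 → ‖v‖ = 1 → 0 ≤ τ → τ ≤ 1 →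
      ‖u + τ • v‖ + ‖u - τ • v‖ ≤ 2 + 2 * C * τ ^ 2 := by
    intro u v τ hu hv h0 h1
    have h2 := H τ ⟨h0, h1⟩
    have h3 : (‖u + τ • v‖ + ‖u - τ • v‖) / 2 - 1 ≤ modSmooth X τ := by
      apply le_csSup
      · refine ⟨τ, ?_⟩
        rintro d ⟨x, y, hx, hy, rfl⟩
        have i1 := norm_add_le x (τ • y)
        have i2 := norm_sub_le x (τ • y)
        rw [norm_smul, hy, Real.norm_of_nonneg h0] at i1 i2
        linarith
      · exact ⟨u, v, hu, hv, rfl⟩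
    rw [Real.rpow_two] at h2
    linarith
  refine ⟨8 + 4 * C + 2 * C ^ 2, by positivity, ?_⟩
  intro x h
  have i1 := norm_add_le x h
  have i2 := norm_sub_le x h
  have n0 := norm_nonneg x
  have n1 := norm_nonneg h
  rcases le_total ‖x‖ ‖h‖ with hxh | hxh
  · have j1 : ‖x + h‖ ^ 2 ≤ (2 * ‖h‖) ^ 2 :=
      pow_le_pow_left₀ (norm_nonneg _) (by linarith) 2
    have j2 : ‖x - h‖ ^ 2 ≤ (2 * ‖h‖) ^ 2 :=
      pow_le_pow_left₀ (norm_nonneg _) (by linarith) 2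
    have : 0 ≤ (4 * C + 2 * C ^ 2) * ‖h‖ ^ 2 := by positivity
    nlinarith [sq_nonneg ‖x‖]
  rcases eq_or_ne h 0 with rfl | hh
  · simp; linarith
  have hs : 0 < ‖h‖ := norm_pos_iff.mpr hh
  have hr : 0 < ‖x‖ := hs.trans_le hxh
  have hu : ‖‖x‖⁻¹ • x‖ = 1 := by rw [norm_smul, norm_inv, norm_norm, inv_mul_cancel₀ hr.ne']
  have hv : ‖‖h‖⁻¹ • h‖ = 1 := by rw [norm_smul, norm_inv, norm_norm, inv_mul_cancel₀ hs.ne']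
  have hτ : ‖h‖ / ‖x‖ ≤ 1 := (div_le_one hr).mpr hxh
  have hU := hunit _ _ (‖h‖ / ‖x‖) hu hv (by positivity) hτ
  have e0 : (‖h‖ / ‖x‖) • (‖h‖⁻¹ • h) = ‖x‖⁻¹ • h := by
    rw [smul_smul]; congr 1; field_simp
  rw [e0, ← smul_add, ← smul_sub, norm_smul, norm_smul, norm_inv, norm_norm] at hU
  have hab : ‖x + h‖ - ‖x - h‖ ≤ 2 * ‖h‖ := by
    have := norm_sub_norm_le (x + h) (x - h)
    have e : (x + h) - (x - h) = (2 : ℝ) • h := by module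
    rw [e, norm_smul] at this
    simpa using this
  have hba : ‖x - h‖ - ‖x + h‖ ≤ 2 * ‖h‖ := by
    have := norm_sub_norm_le (x - h) (x + h)
    have e : (x - h) - (x + h) = (-2 : ℝ) • h := by module
    rw [e, norm_smul] at this
    simpa using this
  have a0 := norm_nonneg (x + h)
  have b0 := norm_nonneg (x - h)
  generalize ‖x + h‖ = a at *
  generalize ‖x - h‖ = b at *
  generalize ‖x‖ = r at *
  generalize ‖h‖ = s at *
  obtain ⟨τ, hτs⟩ : ∃ τ, τ = s / r := ⟨_, rfl⟩
  have hs' : s = τ * r := by rw [hτs]; field_simp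
  rw [← hτs] at hU hτ
  have hτ0 : 0 < τ := by rw [hτs]; positivity
  have hsum : a + b ≤ (2 + 2 * C * τ ^ 2) * r := by
    have : r⁻¹ * (a + b) ≤ 2 + 2 * C * τ ^ 2 := by linarith
    rw [inv_mul_le_iff₀ hr] at this
    linarith
  have hsq : (a + b) ^ 2 ≤ ((2 + 2 * C * τ ^ 2) * r) ^ 2 :=
    pow_le_pow_left₀ (by linarith) hsum 2
  have hd : (a - b) ^ 2 ≤ (2 * s) ^ 2 := sq_le_sq' (by linarith) hab
  have h4 : τ ^ 4 ≤ τ ^ 2 := pow_le_pow_of_le_one hτ0.le hτ (by norm_num)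
  have e5 : ((2 + 2 * C * τ ^ 2) * r) ^ 2 =
      4 * r ^ 2 + 8 * C * s ^ 2 + 4 * C ^ 2 * (τ ^ 4 * r ^ 2) := by rw [hs']; ring
  have e6 : τ ^ 4 * r ^ 2 ≤ s ^ 2 := by
    rw [hs', mul_pow]; exact mul_le_mul_of_nonneg_right h4 (sq_nonneg _)
  have e7 : 4 * C ^ 2 * (τ ^ 4 * r ^ 2) ≤ 4 * C ^ 2 * s ^ 2 :=
    mul_le_mul_of_nonneg_left e6 (by positivity)
  nlinarith [sq_nonneg s]

/-- Differentiability of half the squared norm, with two-sided Bregman bounds. -/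
theorem aux_bregman {X : Type*} [NormedAddCommGroup X] [NormedSpace ℝ X]
    (hconv : PowerConvex X 2) (hsmooth : PowerSmooth X 2) :
    ∃ c > (0 : ℝ), ∃ C > (0 : ℝ),
      (∀ x y : X, c * ‖x - y‖ ^ 2 ≤ bregmanDist 2 x y) ∧
      (∀ x y : X, bregmanDist 2 x y ≤ C * ‖x - y‖ ^ 2) ∧
      (∀ a b y : X, bregmanDist 2 ((1 / 2 : ℝ) • (a + b)) y ≤
        (bregmanDist 2 a y + bregmanDist 2 b y) / 2 - c * ‖a - b‖ ^ 2) := by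
  obtain ⟨c, hc, hK⟩ := aux_convex_s8 hconv
  obtain ⟨C, hC, hS⟩ := aux_smooth hsmooth
  have hsub : ∀ x : X, ∃ f : X →L[ℝ] ℝ, ∀ y, f (y - x) ≤ 1 / 2 * ‖y‖ ^ 2 - 1 / 2 * ‖x‖ ^ 2 := by
    intro x
    obtain ⟨g, hg, hgx⟩ := exists_dual_vector'' ℝ x
    refine ⟨‖x‖ • g, fun y => ?_⟩
    have hgy : g y ≤ ‖y‖ := by
      refine (le_abs_self _).trans ?_
      have := g.le_opNorm y
      rw [Real.norm_eq_abs] at this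
      nlinarith [norm_nonneg y]
    have hgx' : g x = ‖x‖ := by simpa using hgx
    have : (‖x‖ • g) (y - x) = ‖x‖ * g y - ‖x‖ * ‖x‖ := by
      simp [hgx', mul_sub]
    rw [this]
    nlinarith [mul_le_mul_of_nonneg_left hgy (norm_nonneg x), sq_nonneg (‖x‖ - ‖y‖)]
  have hup : ∀ x : X, ∀ f : X →L[ℝ] ℝ,
      (∀ y, f (y - x) ≤ 1 / 2 * ‖y‖ ^ 2 - 1 / 2 * ‖x‖ ^ 2) →
      ∀ y, 1 / 2 * ‖y‖ ^ 2 - 1 / 2 * ‖x‖ ^ 2 - f (y - x) ≤ C * ‖y - x‖ ^ 2 := by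
    intro x f hf y
    have h1 := hS x (y - x)
    have h2 := hf (x - (y - x))
    have e : x - (y - x) - x = -(y - x) := by abel
    rw [e, map_neg] at h2
    rw [add_sub_cancel] at h1
    nlinarith [sq_nonneg ‖y - x‖]
  have hder : ∀ x : X, ∀ y,
      dualityMap 2 x (y - x) ≤ 1 / 2 * ‖y‖ ^ 2 - 1 / 2 * ‖x‖ ^ 2 := by
    intro x
    obtain ⟨f, hf⟩ := hsub x
    have : HasFDerivAt (fun y : X => 1 / (2 : ℝ) * ‖y‖ ^ (2 : ℝ)) f x := by
      rw [hasFDerivAt_iff_isLittleO]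
      have hO : (fun y => 1 / (2 : ℝ) * ‖y‖ ^ (2 : ℝ) - 1 / (2 : ℝ) * ‖x‖ ^ (2 : ℝ) - f (y - x))
          =O[𝓝 x] fun y => ‖y - x‖ ^ 2 := by
        refine Asymptotics.IsBigO.of_bound C (Eventually.of_forall fun y => ?_)
        rw [Real.rpow_two, Real.rpow_two, Real.norm_of_nonneg (by linarith [hf y]),
          Real.norm_of_nonneg (sq_nonneg _)]
        exact hup x f hf y
      refine hO.trans_isLittleO ?_
      refine Asymptotics.IsLittleO.of_norm_right ?_
      have h0 : Tendsto (fun y : X => ‖y - x‖) (𝓝 x) (𝓝 0) := by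
        have : Continuous fun y : X => ‖y - x‖ := by fun_prop
        simpa using this.tendsto x
      exact (Asymptotics.isLittleO_pow_id one_lt_two).comp_tendsto h0
    have e : dualityMap 2 x = f := this.fderiv
    rw [e]; exact hf
  have hD : ∀ x y : X, bregmanDist 2 x y =
      1 / 2 * ‖x‖ ^ 2 - 1 / 2 * ‖y‖ ^ 2 - dualityMap 2 y (x - y) := by
    intro x y
    simp only [bregmanDist, Real.rpow_two]
  have hmid : ∀ a b y : X, bregmanDist 2 ((1 / 2 : ℝ) • (a + b)) y ≤
        (bregmanDist 2 a y + bregmanDist 2 b y) / 2 - c / 2 * ‖a - b‖ ^ 2 := by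
    intro a b y
    rw [hD, hD, hD]
    have h1 := hK a b
    have e : (1 / 2 : ℝ) • (a + b) - y = (1 / 2 : ℝ) • ((a - y) + (b - y)) := by module
    rw [e, map_smul, map_add, norm_smul, smul_eq_mul]
    have : ‖(1 / 2 : ℝ)‖ = 1 / 2 := by norm_num
    rw [this]
    nlinarith
  refine ⟨c / 2, by positivity, C, hC, ?_, ?_, hmid⟩
  · intro x y
    have h1 := hmid x y y
    have h2 : 0 ≤ bregmanDist 2 ((1 / 2 : ℝ) • (x + y)) y := by
      rw [hD]; linarith [hder y ((1 / 2 : ℝ) • (x + y))]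
    have h3 : bregmanDist 2 y y = 0 := by rw [hD]; simp
    rw [h3] at h1
    have : 0 ≤ c * ‖x - y‖ ^ 2 := by positivity
    nlinarith
  · intro x y
    rw [hD]
    exact hup y _ (hder y) x

/-- Existence of Bregman projections onto closed subspaces. -/
theorem aux_exists {X : Type*} [NormedAddCommGroup X] [NormedSpace ℝ X] [CompleteSpace X]
    (g : X → ℝ) (hg : Continuous g) (hg0 : ∀ x, 0 ≤ g x) (c : ℝ) (hc : 0 < c)
    (hmid : ∀ a b : X, g ((1 / 2 : ℝ) • (a + b)) ≤ (g a + g b) / 2 - c * ‖a - b‖ ^ 2)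
    (S : Submodule ℝ X) (hS : IsClosed (S : Set X)) :
    ∃ y, y ∈ (S : Set X) ∧ ∀ m ∈ (S : Set X), g y ≤ g m := by
  have hbdd : BddBelow (g '' S) := ⟨0, by rintro _ ⟨x, -, rfl⟩; exact hg0 x⟩
  have hne : (g '' S).Nonempty := ⟨g 0, 0, S.zero_mem, rfl⟩
  set I := sInf (g '' S) with hI
  have hle : ∀ m ∈ S, I ≤ g m := fun m hm => csInf_le hbdd ⟨m, hm, rfl⟩
  have hseq : ∀ n : ℕ, ∃ m ∈ S, g m < I + 1 / ((n : ℝ) + 1) := by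
    intro n
    have hpos : (0 : ℝ) < 1 / ((n : ℝ) + 1) := by positivity
    obtain ⟨_, ⟨m, hm, rfl⟩, h⟩ := exists_lt_of_csInf_lt hne (lt_add_of_pos_right I hpos)
    exact ⟨m, hm, h⟩
  choose u huS hu using hseq
  have hlim : Tendsto (fun n : ℕ => 1 / ((n : ℝ) + 1)) atTop (𝓝 0) :=
    tendsto_one_div_add_atTop_nhds_zero_nat
  have hcau : CauchySeq u := by
    rw [Metric.cauchySeq_iff]
    intro ε hε
    have hev : ∀ᶠ n : ℕ in atTop, 1 / ((n : ℝ) + 1) < c * ε ^ 2 :=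
      hlim.eventually (gt_mem_nhds (by positivity))
    obtain ⟨K, hK⟩ := eventually_atTop.mp hev
    refine ⟨K, fun m hm n hn => ?_⟩
    have h1 := hle _ (S.smul_mem (1 / 2 : ℝ) (S.add_mem (huS m) (huS n)))
    have h2 := hmid (u m) (u n)
    have h3 := hu m
    have h4 := hu n
    have h5 := hK m hm
    have h6 := hK n hn
    have h7 : c * ‖u m - u n‖ ^ 2 < c * ε ^ 2 := by linarith
    rw [dist_eq_norm]
    exact lt_of_pow_lt_pow_left₀ 2 hε.le (lt_of_mul_lt_mul_left h7 hc.le)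
  obtain ⟨y, hy⟩ := cauchySeq_tendsto_of_complete hcau
  have hyS : y ∈ (S : Set X) := hS.mem_of_tendsto hy (Eventually.of_forall huS)
  refine ⟨y, hyS, fun m hm => ?_⟩
  have : g y ≤ I := by
    have t1 : Tendsto (fun n => g (u n)) atTop (𝓝 (g y)) := (hg.tendsto y).comp hy
    have t2 : Tendsto (fun n : ℕ => I + 1 / ((n : ℝ) + 1)) atTop (𝓝 I) := by
      simpa using hlim.const_add I
    exact le_of_tendsto_of_tendsto' t1 t2 fun n => (hu n).le
  exact this.trans (hle m hm)

/-- Controlled decomposition in a closed sum of subspaces. -/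
theorem aux_decomp {X : Type*} [NormedAddCommGroup X] [NormedSpace ℝ X] [CompleteSpace X]
    (M N : Submodule ℝ X) (hM : IsClosed (M : Set X)) (hN : IsClosed (N : Set X))
    (hMN : IsClosed ((M ⊔ N : Submodule ℝ X) : Set X)) :
    ∃ K > (0 : ℝ), ∀ z ∈ M ⊔ N, ∃ m ∈ M, ∃ n ∈ N, m + n = z ∧ ‖m‖ ≤ K * ‖z‖ := by
  have : CompleteSpace M := hM.completeSpace_coe
  have : CompleteSpace N := hN.completeSpace_coe
  have : CompleteSpace (M ⊔ N : Submodule ℝ X) := hMN.completeSpace_coe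
  let T : (M × N) →L[ℝ] (M ⊔ N : Submodule ℝ X) :=
    (M.subtypeL.coprod N.subtypeL).codRestrict (M ⊔ N) (fun p => by
      simpa using Submodule.add_mem_sup p.1.2 p.2.2)
  have hT : ∀ p : M × N, ((T p : (M ⊔ N : Submodule ℝ X)) : X) = p.1 + p.2 := fun p => by
    simp [T]
  have hsurj : Function.Surjective T := by
    rintro ⟨z, hz⟩
    obtain ⟨m, hm, n, hn, rfl⟩ := Submodule.mem_sup.mp hz
    exact ⟨(⟨m, hm⟩, ⟨n, hn⟩), Subtype.ext (hT _)⟩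
  obtain ⟨K, hK, H⟩ := T.exists_preimage_norm_le hsurj
  refine ⟨K, hK, fun z hz => ?_⟩
  obtain ⟨p, hp, hpn⟩ := H ⟨z, hz⟩
  refine ⟨p.1, p.1.2, p.2, p.2.2, ?_, ?_⟩
  · rw [← hT, hp]
  · exact (norm_fst_le p).trans hpn

theorem statement8 {X : Type*} [NormedAddCommGroup X] [NormedSpace ℝ X] [CompleteSpace X]
    (hconv : PowerConvex X 2) (hsmooth : PowerSmooth X 2)
    (M N : Submodule ℝ X) (hM : IsClosed (M : Set X)) (hN : IsClosed (N : Set X))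
    (hMN : IsClosed ((M ⊔ N : Submodule ℝ X) : Set X)) :
    ∃ κ > (0 : ℝ), ∀ x : X,
      bregmanDist 2 (bregmanProj 2 ((M ⊓ N : Submodule ℝ X) : Set X) x) x ≤
        κ * max (bregmanDist 2 (bregmanProj 2 (M : Set X) x) x)
                (bregmanDist 2 (bregmanProj 2 (N : Set X) x) x) := by
  obtain ⟨c, hc, C, hC, hlow, hup, hmid⟩ := aux_bregman hconv hsmooth
  obtain ⟨K, hK, hdec⟩ := aux_decomp M N hM hN hMN
  have hproj : ∀ S : Submodule ℝ X, IsClosed (S : Set X) → ∀ x : X,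
      bregmanProj 2 (S : Set X) x ∈ (S : Set X) ∧
        ∀ m ∈ (S : Set X), bregmanDist 2 (bregmanProj 2 (S : Set X) x) x ≤ bregmanDist 2 m x := by
    intro S hS x
    have hcont : Continuous fun m : X => bregmanDist 2 m x := by
      simp only [bregmanDist, Real.rpow_two]
      fun_prop
    have hex := aux_exists (fun m => bregmanDist 2 m x) hcont
      (fun m => le_trans (by positivity) (hlow m x)) c hc (fun a b => hmid a b x) S hS
    exact Classical.epsilon_spec hex
  refine ⟨C * (1 + 2 * K) ^ 2 / c, by positivity, fun x => ?_⟩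
  obtain ⟨hm, -⟩ := hproj M hM x
  obtain ⟨hn, -⟩ := hproj N hN x
  obtain ⟨-, hmin⟩ := hproj (M ⊓ N) (by
    rw [Submodule.coe_inf]; exact hM.inter hN) x
  generalize bregmanProj 2 (M : Set X) x = m at *
  generalize bregmanProj 2 (N : Set X) x = n at *
  obtain ⟨m', hm', n', hn', hsum, hb⟩ := hdec (m - n)
    (Submodule.sub_mem _ (Submodule.mem_sup_left hm) (Submodule.mem_sup_right hn))
  have hz : m - m' ∈ (M ⊓ N : Submodule ℝ X) := by
    refine ⟨M.sub_mem hm hm', ?_⟩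
    have : m - m' = n + n' := by
      have : m = m' + n' + n := by rw [hsum]; abel
      rw [this]; abel
    rw [this]
    exact N.add_mem hn hn'
  set B := max (bregmanDist 2 m x) (bregmanDist 2 n x) with hB
  set R := max ‖m - x‖ ‖n - x‖ with hR
  have hR1 : ‖m - x‖ ≤ R := le_max_left _ _
  have hR2 : ‖n - x‖ ≤ R := le_max_right _ _
  have hRB : c * R ^ 2 ≤ B := by
    rcases max_choice ‖m - x‖ ‖n - x‖ with h | h
    · rw [hR, h]; exact (hlow m x).trans (le_max_left _ _)
    · rw [hR, h]; exact (hlow n x).trans (le_max_right _ _)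
  have hmn : ‖m - n‖ ≤ 2 * R := by
    have := norm_sub_le (m - x) (n - x)
    rw [sub_sub_sub_cancel_right] at this
    linarith
  have hzx : ‖m - m' - x‖ ≤ (1 + 2 * K) * R := by
    have := norm_sub_le (m - x) m'
    rw [sub_right_comm] at this
    nlinarith [mul_le_mul_of_nonneg_left hmn hK.le]
  calc bregmanDist 2 (bregmanProj 2 ((M ⊓ N : Submodule ℝ X) : Set X) x) x
      ≤ bregmanDist 2 (m - m') x := hmin _ hz
    _ ≤ C * ‖m - m' - x‖ ^ 2 := hup _ _
    _ ≤ C * ((1 + 2 * K) * R) ^ 2 :=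
        mul_le_mul_of_nonneg_left (pow_le_pow_left₀ (norm_nonneg _) hzx 2) hC.le
    _ = C * (1 + 2 * K) ^ 2 / c * (c * R ^ 2) := by field_simp
    _ ≤ C * (1 + 2 * K) ^ 2 / c * B := mul_le_mul_of_nonneg_left hRB (by positivity)
end
end

section
/- In X = ℝ³ equipped with the ℓ_q norm, where 1 < q < ∞ and q ≠ 2, let M₁ = span{e₁, e₂} and M₂ = span{e₁, e₃}. Then the Bregman projections (with exponent p = q) are Π^q_{M₁}(x,y,z) = (x,y,0), Π^q_{M₂}(x,y,z) = (x,0,z) and Π^q_{M₁∩M₂}(x,y,z) = (x,0,0); the Bregman distances satisfy D_q(M₁, v) = (1−1/q)|z|^q, D_q(M₂, v) = (1−1/q)|y|^q and D_q(M₁∩M₂, v) = (1−1/q)(|y|^q + |z|^q) for v = (x,y,z); consequently D_q(M₁∩M₂, v) ≤ 2 · max{D_q(M₁, v), D_q(M₂, v)} for all v, so the pair (M₁, M₂) is linear Bregman regular. -/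
open Filter Topology

noncomputable section

variable {X : Type*} [NormedAddCommGroup X] [NormedSpace ℝ X]

/-- `ℝ³` equipped with the `ℓ_q` norm. -/
abbrev lqSpace (q : ℝ) : Type := PiLp (ENNReal.ofReal q) (fun _ : Fin 3 => ℝ)

/-- The vector `(x, y, z)` in `ℝ³` with the `ℓ_q` norm. -/
def vec3 (q : ℝ) (x y z : ℝ) : lqSpace q :=
  (WithLp.equiv (ENNReal.ofReal q) (∀ _ : Fin 3, ℝ)).symm ![x, y, z]

/-- `M₁ = span{e₁, e₂}`. -/
def subM₁ (q : ℝ) : Submodule ℝ (lqSpace q) :=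
  Submodule.span ℝ {vec3 q 1 0 0, vec3 q 0 1 0}

/-- `M₂ = span{e₁, e₃}`. -/
def subM₂ (q : ℝ) : Submodule ℝ (lqSpace q) :=
  Submodule.span ℝ {vec3 q 1 0 0, vec3 q 0 0 1}

/-- One-dimensional Bregman distance. -/
def bd1 (q a b : ℝ) : ℝ :=
  1 / q * |a| ^ q - 1 / q * |b| ^ q - |b| ^ (q - 2) * b * (a - b)

theorem abs_rpow_aux (q b : ℝ) (hq : 1 < q) : |b| ^ (q - 2) * b * b = |b| ^ q := by
  by_cases hb : b = 0
  · subst hb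
    simp [Real.zero_rpow (by linarith : q ≠ 0)]
  · have h : 0 < |b| := abs_pos.mpr hb
    have h2 : b * b = |b| ^ (2 : ℝ) := by
      rw [Real.rpow_two, sq_abs]; ring
    rw [mul_assoc, h2, ← Real.rpow_add h]
    congr 1; ring

theorem bd1_zero (q b : ℝ) (hq : 1 < q) : bd1 q 0 b = (1 - 1 / q) * |b| ^ q := by
  have h := abs_rpow_aux q b hq
  have h0 : (0 : ℝ) ^ q = 0 := Real.zero_rpow (by linarith)
  unfold bd1
  rw [abs_zero, h0]
  linarith

theorem bd1_self (q b : ℝ) : bd1 q b b = 0 := by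
  unfold bd1; ring

theorem bd1_pos (q a b : ℝ) (hq : 1 < q) (hab : a ≠ b) : 0 < bd1 q a b := by
  have hq0 : 0 < q := by linarith
  by_cases hb : b = 0
  · subst hb
    have h0 : (0 : ℝ) ^ q = 0 := Real.zero_rpow (by linarith)
    have h : 0 < |a| := abs_pos.mpr hab
    unfold bd1
    rw [abs_zero, h0]
    have : 0 < |a| ^ q := Real.rpow_pos_of_pos h q
    simp only [mul_zero, zero_mul, sub_zero]
    positivity
  · obtain ⟨t, rfl⟩ : ∃ t, a = t * b := ⟨a / b, by field_simp⟩
    have ht : t ≠ 1 := by rintro rfl; simp at hab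
    have h := abs_rpow_aux q b hq
    have hbq : 0 < |b| ^ q := Real.rpow_pos_of_pos (abs_pos.mpr hb) q
    have e : bd1 q (t * b) b = |b| ^ q * (1 / q * (|t| ^ q - (1 + q * (t - 1)))) := by
      unfold bd1
      rw [abs_mul, Real.mul_rpow (abs_nonneg _) (abs_nonneg _)]
      have : |b| ^ (q - 2) * b * (t * b - b) = |b| ^ q * (t - 1) := by rw [← h]; ring
      rw [this]
      field_simp
      ring
    rw [e]
    have key : 1 + q * (t - 1) < |t| ^ q := by
      by_cases h1 : |t| = 1
      · rcases (abs_eq (by norm_num : (0 : ℝ) ≤ 1)).mp h1 with h2 | h2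
        · exact absurd h2 ht
        · rw [h1, Real.one_rpow, h2]; nlinarith
      · have := one_add_mul_self_lt_rpow_one_add (s := |t| - 1) (p := q)
          (by linarith [abs_nonneg t]) (sub_ne_zero.mpr h1) hq
        have h3 : q * (t - 1) ≤ q * (|t| - 1) :=
          mul_le_mul_of_nonneg_left (by linarith [le_abs_self t]) hq0.le
        rw [add_sub_cancel] at this
        linarith
    have : 0 < |t| ^ q - (1 + q * (t - 1)) := by linarith
    positivity

theorem bd1_nonneg (q a b : ℝ) (hq : 1 < q) : 0 ≤ bd1 q a b := by
  by_cases h : a = b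
  · rw [h, bd1_self]
  · exact (bd1_pos q a b hq h).le

theorem bd1_eq_zero (q a b : ℝ) (hq : 1 < q) (h : bd1 q a b ≤ 0) : a = b := by
  by_contra hne
  exact absurd (bd1_pos q a b hq hne) (not_lt.mpr h)

theorem lq_norm_rpow (q : ℝ) (hq : 1 < q) [Fact (1 ≤ ENNReal.ofReal q)] (v : lqSpace q) :
    ‖v‖ ^ q = |v 0| ^ q + |v 1| ^ q + |v 2| ^ q := by
  have hr : (ENNReal.ofReal q).toReal = q := ENNReal.toReal_ofReal (by linarith)
  rw [PiLp.norm_eq_sum (by rw [hr]; linarith), hr, ← Real.rpow_mul (by positivity),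
    one_div_mul_cancel (by linarith), Real.rpow_one, Fin.sum_univ_three]
  simp [Real.norm_eq_abs]

theorem lq_duality (q : ℝ) (hq : 1 < q) [Fact (1 ≤ ENNReal.ofReal q)] (v w : lqSpace q) :
    dualityMap q v w = |v 0| ^ (q - 2) * v 0 * w 0 + |v 1| ^ (q - 2) * v 1 * w 1
      + |v 2| ^ (q - 2) * v 2 * w 2 := by
  have hc : ∀ i : Fin 3, HasFDerivAt (fun y : lqSpace q => |y i| ^ q)
      ((q * |v i| ^ (q - 2) * v i) • (PiLp.proj (𝕜 := ℝ) (ENNReal.ofReal q)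
        (fun _ : Fin 3 => ℝ) i)) v := by
    intro i
    exact (hasDerivAt_abs_rpow (v i) hq).comp_hasFDerivAt v
      (PiLp.proj (𝕜 := ℝ) (ENNReal.ofReal q) (fun _ : Fin 3 => ℝ) i).hasFDerivAt
  have hs := (((hc 0).add (hc 1)).add (hc 2)).const_mul (1 / q)
  have hf : (fun y : lqSpace q => 1 / q * ‖y‖ ^ q)
      = fun y => 1 / q * (|y 0| ^ q + |y 1| ^ q + |y 2| ^ q) := by
    funext y; rw [lq_norm_rpow q hq]
  unfold dualityMap
  rw [hf]
  have he := HasFDerivAt.fderiv hs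
  refine (DFunLike.congr_fun he w).trans ?_
  have : q ≠ 0 := by linarith
  simp
  field_simp

theorem lq_bregman (q : ℝ) (hq : 1 < q) [Fact (1 ≤ ENNReal.ofReal q)] (u v : lqSpace q) :
    bregmanDist q u v = bd1 q (u 0) (v 0) + bd1 q (u 1) (v 1) + bd1 q (u 2) (v 2) := by
  unfold bregmanDist bd1
  rw [lq_norm_rpow q hq, lq_norm_rpow q hq, lq_duality q hq]
  simp only [PiLp.sub_apply]
  ring

theorem bregmanProj_eq {Y : Type*} [NormedAddCommGroup Y] [NormedSpace ℝ Y] (p : ℝ) (S : Set Y)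
    (x P : Y) (hP : P ∈ S) (hmin : ∀ m ∈ S, bregmanDist p P x ≤ bregmanDist p m x)
    (huniq : ∀ m ∈ S, bregmanDist p m x ≤ bregmanDist p P x → m = P) :
    bregmanProj p S x = P := by
  have h := Classical.epsilon_spec
    (p := fun y => y ∈ S ∧ ∀ m ∈ S, bregmanDist p y x ≤ bregmanDist p m x) ⟨P, hP, hmin⟩
  exact huniq _ h.1 (h.2 P hP)

@[simp] theorem vec3_0 (q x y z : ℝ) : (vec3 q x y z) 0 = x := rfl
@[simp] theorem vec3_1 (q x y z : ℝ) : (vec3 q x y z) 1 = y := rfl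
@[simp] theorem vec3_2 (q x y z : ℝ) : (vec3 q x y z) 2 = z := rfl

theorem lq_ext (q : ℝ) (u v : lqSpace q) (h0 : u 0 = v 0) (h1 : u 1 = v 1) (h2 : u 2 = v 2) :
    u = v := by
  ext i
  fin_cases i
  · exact h0
  · exact h1
  · exact h2

theorem mem_subM₁ (q : ℝ) (v : lqSpace q) : v ∈ subM₁ q ↔ v 2 = 0 := by
  unfold subM₁
  rw [Submodule.mem_span_pair]
  constructor
  · rintro ⟨a, b, rfl⟩
    simp
  · intro h
    refine ⟨v 0, v 1, lq_ext q _ _ ?_ ?_ ?_⟩ <;> simp [h]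

theorem mem_subM₂ (q : ℝ) (v : lqSpace q) : v ∈ subM₂ q ↔ v 1 = 0 := by
  unfold subM₂
  rw [Submodule.mem_span_pair]
  constructor
  · rintro ⟨a, b, rfl⟩
    simp
  · intro h
    refine ⟨v 0, v 2, lq_ext q _ _ ?_ ?_ ?_⟩ <;> simp [h]


theorem statement9 (q : ℝ) (hq1 : 1 < q) (hqne : q ≠ 2) [Fact (1 ≤ ENNReal.ofReal q)] :
    (∀ x y z : ℝ,
      bregmanProj q (subM₁ q : Set (lqSpace q)) (vec3 q x y z) = vec3 q x y 0 ∧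
      bregmanProj q (subM₂ q : Set (lqSpace q)) (vec3 q x y z) = vec3 q x 0 z ∧
      bregmanProj q ((subM₁ q ⊓ subM₂ q : Submodule ℝ (lqSpace q)) : Set (lqSpace q))
          (vec3 q x y z) = vec3 q x 0 0 ∧
      bregmanDistSet q (subM₁ q : Set (lqSpace q)) (vec3 q x y z) = (1 - 1 / q) * |z| ^ q ∧
      bregmanDistSet q (subM₂ q : Set (lqSpace q)) (vec3 q x y z) = (1 - 1 / q) * |y| ^ q ∧
      bregmanDistSet q ((subM₁ q ⊓ subM₂ q : Submodule ℝ (lqSpace q)) : Set (lqSpace q))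
          (vec3 q x y z) = (1 - 1 / q) * (|y| ^ q + |z| ^ q)) ∧
    (∀ v : lqSpace q,
      bregmanDistSet q ((subM₁ q ⊓ subM₂ q : Submodule ℝ (lqSpace q)) : Set (lqSpace q)) v ≤
        2 * max (bregmanDistSet q (subM₁ q : Set (lqSpace q)) v)
                (bregmanDistSet q (subM₂ q : Set (lqSpace q)) v)) ∧
    (∃ κ > (0 : ℝ), ∀ v : lqSpace q,
      bregmanDistSet q ((subM₁ q ⊓ subM₂ q : Submodule ℝ (lqSpace q)) : Set (lqSpace q)) v ≤
        κ * max (bregmanDistSet q (subM₁ q : Set (lqSpace q)) v)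
                (bregmanDistSet q (subM₂ q : Set (lqSpace q)) v)) := by
  have H : ∀ x y z : ℝ,
      bregmanProj q (subM₁ q : Set (lqSpace q)) (vec3 q x y z) = vec3 q x y 0 ∧
      bregmanProj q (subM₂ q : Set (lqSpace q)) (vec3 q x y z) = vec3 q x 0 z ∧
      bregmanProj q ((subM₁ q ⊓ subM₂ q : Submodule ℝ (lqSpace q)) : Set (lqSpace q))
          (vec3 q x y z) = vec3 q x 0 0 := by
    intro x y z
    refine ⟨?_, ?_, ?_⟩
    · apply bregmanProj_eq
      · rw [SetLike.mem_coe, mem_subM₁]; simp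
      · intro m hm
        rw [SetLike.mem_coe, mem_subM₁] at hm
        simp only [lq_bregman q hq1, vec3_0, vec3_1, vec3_2, hm, bd1_self]
        linarith [bd1_nonneg q (m 0) x hq1, bd1_nonneg q (m 1) y hq1]
      · intro m hm h
        rw [SetLike.mem_coe, mem_subM₁] at hm
        simp only [lq_bregman q hq1, vec3_0, vec3_1, vec3_2, hm, bd1_self] at h
        have h0 := bd1_nonneg q (m 0) x hq1
        have h1 := bd1_nonneg q (m 1) y hq1
        exact lq_ext q _ _ (bd1_eq_zero q _ _ hq1 (by simp only [vec3_0]; linarith))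
          (bd1_eq_zero q _ _ hq1 (by simp only [vec3_1]; linarith)) hm
    · apply bregmanProj_eq
      · rw [SetLike.mem_coe, mem_subM₂]; simp
      · intro m hm
        rw [SetLike.mem_coe, mem_subM₂] at hm
        simp only [lq_bregman q hq1, vec3_0, vec3_1, vec3_2, hm, bd1_self]
        linarith [bd1_nonneg q (m 0) x hq1, bd1_nonneg q (m 2) z hq1]
      · intro m hm h
        rw [SetLike.mem_coe, mem_subM₂] at hm
        simp only [lq_bregman q hq1, vec3_0, vec3_1, vec3_2, hm, bd1_self] at h
        have h0 := bd1_nonneg q (m 0) x hq1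
        have h1 := bd1_nonneg q (m 2) z hq1
        exact lq_ext q _ _ (bd1_eq_zero q _ _ hq1 (by simp only [vec3_0]; linarith)) hm
          (bd1_eq_zero q _ _ hq1 (by simp only [vec3_2]; linarith))
    · apply bregmanProj_eq
      · rw [SetLike.mem_coe, Submodule.mem_inf, mem_subM₁, mem_subM₂]; simp
      · intro m hm
        rw [SetLike.mem_coe, Submodule.mem_inf, mem_subM₁, mem_subM₂] at hm
        simp only [lq_bregman q hq1, vec3_0, vec3_1, vec3_2, hm.1, hm.2, bd1_self]
        linarith [bd1_nonneg q (m 0) x hq1]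
      · intro m hm h
        rw [SetLike.mem_coe, Submodule.mem_inf, mem_subM₁, mem_subM₂] at hm
        simp only [lq_bregman q hq1, vec3_0, vec3_1, vec3_2, hm.1, hm.2, bd1_self] at h
        exact lq_ext q _ _ (bd1_eq_zero q _ _ hq1 (by simp only [vec3_0]; linarith)) hm.2 hm.1
  have H2 : ∀ x y z : ℝ,
      bregmanDistSet q (subM₁ q : Set (lqSpace q)) (vec3 q x y z) = (1 - 1 / q) * |z| ^ q ∧
      bregmanDistSet q (subM₂ q : Set (lqSpace q)) (vec3 q x y z) = (1 - 1 / q) * |y| ^ q ∧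
      bregmanDistSet q ((subM₁ q ⊓ subM₂ q : Submodule ℝ (lqSpace q)) : Set (lqSpace q))
          (vec3 q x y z) = (1 - 1 / q) * (|y| ^ q + |z| ^ q) := by
    intro x y z
    obtain ⟨h1, h2, h3⟩ := H x y z
    unfold bregmanDistSet
    rw [h1, h2, h3]
    simp only [lq_bregman q hq1, vec3_0, vec3_1, vec3_2, bd1_self, bd1_zero q _ hq1]
    refine ⟨?_, ?_, ?_⟩ <;> ring
  have H3 : ∀ v : lqSpace q,
      bregmanDistSet q ((subM₁ q ⊓ subM₂ q : Submodule ℝ (lqSpace q)) : Set (lqSpace q)) v ≤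
        2 * max (bregmanDistSet q (subM₁ q : Set (lqSpace q)) v)
                (bregmanDistSet q (subM₂ q : Set (lqSpace q)) v) := by
    intro v
    have hv : v = vec3 q (v 0) (v 1) (v 2) := lq_ext q _ _ rfl rfl rfl
    obtain ⟨h1, h2, h3⟩ := H2 (v 0) (v 1) (v 2)
    rw [← hv] at h1 h2 h3
    rw [h1, h2, h3]
    have ha := le_max_left ((1 - 1 / q) * |v 2| ^ q) ((1 - 1 / q) * |v 1| ^ q)
    have hb := le_max_right ((1 - 1 / q) * |v 2| ^ q) ((1 - 1 / q) * |v 1| ^ q)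
    linarith
  refine ⟨fun x y z => ?_, H3, 2, by norm_num, H3⟩
  obtain ⟨a, b, c⟩ := H x y z
  exact ⟨a, b, c, H2 x y z⟩
end
end
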